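/- arXiv:1712.03336 — 9 statements merged into one kernel-verified Lean document; each statement's English description precedes it below -/
import Mathlib

section
/- Suppose incentive compatibility holds, i.e., ṽ(t) ≥ v(τ, t) for all τ, t ∈ [a, ā]. Then the envelope formula holds: for every t ∈ [a, ā], ṽ(t) = ṽ(a) + θ ∫_a^t p̃(τ) dτ. (Here p̃ is monotone increasing under incentive compatibility, hence integrable on [a, t].) This is the necessity part (ii) of Lemma 1. -/
/-- Lemma 1, necessity part (ii) (envelope formula): under incentive
compatibility, ṽ(t) = ṽ(a) + θ ∫_a^t p̃(τ) dτ for every t ∈ [a, ā]. -/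
theorem stmt_2 (θ a abar : ℝ) (hθ : 0 < θ) (hab : a < abar)
    (ptld xtld : ℝ → ℝ)
    (hIC : ∀ τ ∈ Set.Icc a abar, ∀ t ∈ Set.Icc a abar,
        θ * t * ptld τ - xtld τ ≤ θ * t * ptld t - xtld t) :
    ∀ t ∈ Set.Icc a abar,
      θ * t * ptld t - xtld t
        = (θ * a * ptld a - xtld a) + θ * ∫ τ in a..t, ptld τ := by
  have hmono : MonotoneOn ptld (Set.Icc a abar) := by
    intro s hs t ht hst
    rcases hst.eq_or_lt with rfl | hlt
    · exact le_rfl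
    have h1 := hIC s hs t ht
    have h2 := hIC t ht s hs
    have h3 : 0 ≤ (θ * (t - s)) * (ptld t - ptld s) := by nlinarith
    have h4 : 0 < θ * (t - s) := mul_pos hθ (sub_pos.2 hlt)
    have := nonneg_of_mul_nonneg_right h3 h4
    linarith
  have hint : ∀ s ∈ Set.Icc a abar, ∀ t ∈ Set.Icc a abar, s ≤ t →
      IntervalIntegrable ptld MeasureTheory.volume s t := by
    intro s hs t ht hst
    apply MonotoneOn.intervalIntegrable
    rw [Set.uIcc_of_le hst]
    exact hmono.mono (Set.Icc_subset_Icc hs.1 ht.2)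
  have key : ∀ n : ℕ, ∀ s ∈ Set.Icc a abar, ∀ t ∈ Set.Icc a abar, s ≤ t →
      |(θ * t * ptld t - xtld t) - (θ * s * ptld s - xtld s) - θ * ∫ τ in s..t, ptld τ|
        ≤ θ * (ptld t - ptld s) * (t - s) * (1 / 2) ^ n := by
    intro n
    induction n with
    | zero =>
      intro s hs t ht hst
      have h1 := hIC s hs t ht
      have h2 := hIC t ht s hs
      have hsub : Set.Icc s t ⊆ Set.Icc a abar := Set.Icc_subset_Icc hs.1 ht.2
      have h3 : (∫ _τ in s..t, ptld s) ≤ ∫ τ in s..t, ptld τ :=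
        intervalIntegral.integral_mono_on hst (by simp) (hint s hs t ht hst)
          (fun x hx => hmono hs (hsub hx) hx.1)
      have h4 : (∫ τ in s..t, ptld τ) ≤ ∫ _τ in s..t, ptld t :=
        intervalIntegral.integral_mono_on hst (hint s hs t ht hst) (by simp)
          (fun x hx => hmono (hsub hx) ht hx.2)
      rw [intervalIntegral.integral_const, smul_eq_mul] at h3 h4
      have h5 := mul_le_mul_of_nonneg_left h3 hθ.le
      have h6 := mul_le_mul_of_nonneg_left h4 hθ.le
      rw [abs_le]
      constructor <;> nlinarith
    | succ n ih =>
      intro s hs t ht hst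
      have hsm : s ≤ (s + t) / 2 := by linarith
      have hmt : (s + t) / 2 ≤ t := by linarith
      have hm : (s + t) / 2 ∈ Set.Icc a abar := ⟨hs.1.trans hsm, hmt.trans ht.2⟩
      have h1 := ih s hs _ hm hsm
      have h2 := ih _ hm t ht hmt
      have h3 := intervalIntegral.integral_add_adjacent_intervals
        (hint s hs _ hm hsm) (hint _ hm t ht hmt)
      rw [← h3]
      have h4 := (abs_add_le _ _).trans (add_le_add h1 h2)
      refine le_trans (le_of_eq ?_) (h4.trans (le_of_eq ?_))
      · congr 1
        ring
      · rw [pow_succ]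
        ring
  intro t ht
  have ha : a ∈ Set.Icc a abar := ⟨le_rfl, hab.le⟩
  have hlim : Filter.Tendsto (fun n : ℕ => θ * (ptld t - ptld a) * (t - a) * (1 / 2 : ℝ) ^ n)
      Filter.atTop (nhds (θ * (ptld t - ptld a) * (t - a) * 0)) :=
    (tendsto_pow_atTop_nhds_zero_of_lt_one (by norm_num) (by norm_num)).const_mul _
  have h := ge_of_tendsto' hlim (fun n => key n a ha t ht ht.1)
  rw [mul_zero] at h
  have := abs_nonpos_iff.1 h
  linarith
end

section
/- Suppose (i) p̃ is monotone increasing and nonnegative on [a, ā]; (ii) ṽ(t) = ṽ(a) + θ ∫_a^t p̃(τ) dτ for all t ∈ [a, ā]; and (iii) ṽ(a) ≥ 0. Then incentive compatibility holds (ṽ(t) ≥ v(τ, t) for all τ, t ∈ [a, ā]) and individual rationality holds (ṽ(t) ≥ 0 for all t ∈ [a, ā]). (Sufficiency part of Lemma 1.) -/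
/-- Lemma 1, sufficiency part: if the interim allocation p̃ is monotone increasing
and nonnegative on [a, ā], the envelope formula holds and ṽ(a) ≥ 0, then incentive
compatibility and individual rationality hold. -/
theorem stmt_3 (θ a abar : ℝ) (hθ : 0 < θ) (hab : a < abar)
    (ptld xtld : ℝ → ℝ)
    (hmono : MonotoneOn ptld (Set.Icc a abar))
    (hnn : ∀ t ∈ Set.Icc a abar, 0 ≤ ptld t)
    (henv : ∀ t ∈ Set.Icc a abar,
        θ * t * ptld t - xtld t
          = (θ * a * ptld a - xtld a) + θ * ∫ τ in a..t, ptld τ)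
    (hva : 0 ≤ θ * a * ptld a - xtld a) :
    (∀ τ ∈ Set.Icc a abar, ∀ t ∈ Set.Icc a abar,
        θ * t * ptld τ - xtld τ ≤ θ * t * ptld t - xtld t) ∧
    (∀ t ∈ Set.Icc a abar, 0 ≤ θ * t * ptld t - xtld t) := by
  have hint : ∀ s ∈ Set.Icc a abar, ∀ t ∈ Set.Icc a abar,
      IntervalIntegrable ptld MeasureTheory.volume s t := fun s hs t ht =>
    (hmono.mono (Set.uIcc_subset_Icc hs ht)).intervalIntegrable
  have ha : a ∈ Set.Icc a abar := ⟨le_refl a, hab.le⟩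
  have key : ∀ s ∈ Set.Icc a abar, ∀ t ∈ Set.Icc a abar,
      (t - s) * ptld s ≤ ∫ x in s..t, ptld x := by
    intro s hs t ht
    rcases le_total s t with h | h
    · have h1 : ∫ x in s..t, ptld s ≤ ∫ x in s..t, ptld x := by
        apply intervalIntegral.integral_mono_on h (by simp) (hint s hs t ht)
        intro x hx
        exact hmono hs ⟨hs.1.trans hx.1, hx.2.trans ht.2⟩ hx.1
      simpa using h1
    · have h1 : ∫ x in t..s, ptld x ≤ ∫ x in t..s, ptld s := by
        apply intervalIntegral.integral_mono_on h (hint t ht s hs) (by simp)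
        intro x hx
        exact hmono ⟨ht.1.trans hx.1, hx.2.trans hs.2⟩ hs hx.2
      rw [intervalIntegral.integral_const, smul_eq_mul] at h1
      rw [intervalIntegral.integral_symm]
      linarith
  refine ⟨fun s hs t ht => ?_, fun t ht => ?_⟩
  · have h1 := henv s hs
    have h2 := henv t ht
    have h3 := intervalIntegral.integral_add_adjacent_intervals (hint a ha s hs) (hint s hs t ht)
    have h4 := mul_le_mul_of_nonneg_left (key s hs t ht) hθ.le
    rw [← h3] at h2
    linarith
  · rw [henv t ht]
    have : 0 ≤ ∫ x in a..t, ptld x :=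
      intervalIntegral.integral_nonneg ht.1 fun x hx => hnn x ⟨hx.1, hx.2.trans ht.2⟩
    positivity
end

section
/- Fix j ∈ {1,…,n}. Suppose the mechanism (p, x) satisfies fraction feasibility (FF), x_j is integrable, and the envelope condition holds for user j: ṽ_j(t) = ṽ_j(a_j) + θ ∫_{a_j}^{t} p̃_j(τ) dτ for all t ∈ T_j, with p̃_j monotone increasing. Then the expected payment of user j satisfies ∫_T x_j(t) f(t) dt = −ṽ_j(a_j) + θ ∫_T [ t_j − (1 − F_j(t_j))/f_j(t_j) ] (∑_{i∈S_j} p_i(t)) f(t) dt. (Per-user payment identity, equation (45) in the proof of Lemma 2.) -/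
open MeasureTheory Finset

noncomputable section Caching

/-- The joint type space T = ∏_j [a_j, ā_j]. -/
def Tspace {n : ℕ} (a abar : Fin n → ℝ) : Set (Fin n → ℝ) :=
  Set.univ.pi fun j => Set.Icc (a j) (abar j)

/-- The joint density f(t) = ∏_j f_j(t_j). -/
def jointDens {n : ℕ} (f : Fin n → ℝ → ℝ) (t : Fin n → ℝ) : ℝ :=
  ∏ j, f j (t j)

/-- Interim allocation p̃_j(τ) = ∫_{T_{−j}} (∑_{i∈S_j} p_i(τ, t_{−j})) f_{−j}(t_{−j}) dt_{−j},
written as an integral over the whole type space against the joint density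
(the coordinate j integrates out since f_j is a probability density). -/
def interimAlloc {n m : ℕ} (a abar : Fin n → ℝ) (f : Fin n → ℝ → ℝ)
    (S : Fin n → Finset (Fin m)) (p : (Fin n → ℝ) → Fin m → ℝ)
    (j : Fin n) (τ : ℝ) : ℝ :=
  ∫ t in Tspace a abar, (∑ i ∈ S j, p (Function.update t j τ) i) * jointDens f t

/-- Interim payment x̃_j(τ) = ∫_{T_{−j}} x_j(τ, t_{−j}) f_{−j}(t_{−j}) dt_{−j}. -/
def interimPay {n : ℕ} (a abar : Fin n → ℝ) (f : Fin n → ℝ → ℝ)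
    (x : (Fin n → ℝ) → Fin n → ℝ) (j : Fin n) (τ : ℝ) : ℝ :=
  ∫ t in Tspace a abar, x (Function.update t j τ) j * jointDens f t

/-- Truthful interim utility ṽ_j(t) = θ t p̃_j(t) − x̃_j(t). -/
def vtld {n m : ℕ} (θ : ℝ) (a abar : Fin n → ℝ) (f : Fin n → ℝ → ℝ)
    (S : Fin n → Finset (Fin m)) (p : (Fin n → ℝ) → Fin m → ℝ)
    (x : (Fin n → ℝ) → Fin n → ℝ) (j : Fin n) (t : ℝ) : ℝ :=
  θ * t * interimAlloc a abar f S p j t - interimPay a abar f x j t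

theorem aux_lintegral_prod {n : ℕ} (ν : Fin n → Measure ℝ) [∀ k, SigmaFinite (ν k)]
    (f : Fin n → ℝ → ℝ) (hf : ∀ k, Integrable (f k) (ν k)) :
    ∫⁻ t, ∏ k, ENNReal.ofReal (f k (t k)) ∂(Measure.pi ν)
      = ∏ k, ∫⁻ t, ENNReal.ofReal (f k t) ∂(ν k) := by
  have hg : ∀ k, Integrable (fun t => max (f k t) 0) (ν k) := fun k => (hf k).pos_part
  have e : ∀ r : ℝ, ENNReal.ofReal r = ENNReal.ofReal (max r 0) := by
    intro r; simp
  have h1 : ∀ t : Fin n → ℝ, ∏ k, ENNReal.ofReal (f k (t k))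
      = ENNReal.ofReal (∏ k, max (f k (t k)) 0) := by
    intro t
    rw [ENNReal.ofReal_prod_of_nonneg (fun k _ => le_max_right _ _)]
    exact Finset.prod_congr rfl fun k _ => e _
  simp_rw [h1]
  rw [← ofReal_integral_eq_lintegral_ofReal (Integrable.fintype_prod hg)
    (Filter.Eventually.of_forall fun t => Finset.prod_nonneg fun k _ => le_max_right _ _),
    integral_fintype_prod_eq_prod (fun k t => max (f k t) 0),
    ENNReal.ofReal_prod_of_nonneg (fun k _ => integral_nonneg (f := fun t => max (f k t) 0)
      fun t => le_max_right _ _)]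
  refine Finset.prod_congr rfl fun k _ => ?_
  rw [ofReal_integral_eq_lintegral_ofReal (hg k)
    (Filter.Eventually.of_forall fun t => le_max_right _ _)]
  exact lintegral_congr fun t => (e _).symm

theorem aux_pi_withDensity {n : ℕ} (ν : Fin n → Measure ℝ) [∀ k, SigmaFinite (ν k)]
    (f : Fin n → ℝ → ℝ) (hf : ∀ k, Integrable (f k) (ν k)) :
    Measure.pi (fun k => (ν k).withDensity (fun t => ENNReal.ofReal (f k t)))
      = (Measure.pi ν).withDensity (fun t => ∏ k, ENNReal.ofReal (f k (t k))) := by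
  refine Measure.pi_eq fun s hs => ?_
  rw [withDensity_apply _ (MeasurableSet.univ_pi hs), Measure.restrict_pi_pi,
    aux_lintegral_prod _ _ fun k => (hf k).restrict]
  exact Finset.prod_congr rfl fun k _ => (withDensity_apply _ (hs k)).symm

theorem aux_update {n : ℕ} (μ : Fin n → Measure ℝ) [∀ k, IsProbabilityMeasure (μ k)]
    (j : Fin n) :
    MeasurePreserving (fun z : ℝ × (Fin n → ℝ) => Function.update z.2 j z.1)
      ((μ j).prod (Measure.pi μ)) (Measure.pi μ) := by
  have hm : Measurable (fun z : ℝ × (Fin n → ℝ) => Function.update z.2 j z.1) := by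
    refine measurable_pi_iff.2 fun k => ?_
    by_cases h : k = j
    · subst h; simpa using measurable_fst
    · simp only [Function.update_of_ne h]; fun_prop
  refine ⟨hm, ?_⟩
  symm
  refine Measure.pi_eq fun s hs => ?_
  rw [Measure.map_apply hm (MeasurableSet.univ_pi hs)]
  have : (fun z : ℝ × (Fin n → ℝ) => Function.update z.2 j z.1) ⁻¹' (Set.univ.pi s)
      = (s j) ×ˢ (Set.univ.pi (Function.update s j Set.univ)) := by
    ext z
    simp only [Set.mem_preimage, Set.mem_pi, Set.mem_univ, true_imp_iff, Set.mem_prod]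
    constructor
    · intro h
      refine ⟨by simpa using h j, fun k => ?_⟩
      by_cases hk : k = j
      · subst hk; simp
      · simpa [hk] using h k
    · rintro ⟨h1, h2⟩ k
      by_cases hk : k = j
      · subst hk; simpa using h1
      · simpa [hk] using h2 k
  rw [this, Measure.prod_prod, Measure.pi_pi, ← Finset.mul_prod_erase _ _ (Finset.mem_univ j),
    ← Finset.mul_prod_erase _ (fun i => μ i (s i)) (Finset.mem_univ j)]
  simp only [Function.update_self, measure_univ, one_mul]
  congr 1
  refine Finset.prod_congr rfl fun k hk => ?_
  rw [Function.update_of_ne (Finset.ne_of_mem_erase hk)]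

theorem aux_fubini {n : ℕ} (μ : Fin n → Measure ℝ) [∀ k, IsProbabilityMeasure (μ k)]
    (j : Fin n) (G : (Fin n → ℝ) → ℝ) (hG : Integrable G (Measure.pi μ)) :
    Integrable (fun τ => ∫ t, G (Function.update t j τ) ∂(Measure.pi μ)) (μ j) ∧
    ∫ t, G t ∂(Measure.pi μ)
      = ∫ τ, (∫ t, G (Function.update t j τ) ∂(Measure.pi μ)) ∂(μ j) := by
  have h := aux_update μ j
  have hi : Integrable (fun z : ℝ × (Fin n → ℝ) => G (Function.update z.2 j z.1))
      ((μ j).prod (Measure.pi μ)) := h.integrable_comp_of_integrable hG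
  refine ⟨hi.integral_prod_left, ?_⟩
  rw [← integral_prod (fun z : ℝ × (Fin n → ℝ) => G (Function.update z.2 j z.1)) hi]
  conv_lhs => rw [← h.map_eq]
  rw [integral_map h.aemeasurable]
  rw [h.map_eq]; exact hG.aestronglyMeasurable

theorem aux_parts (A g : ℝ → ℝ) (a b : ℝ)
    (hA : IntervalIntegrable A volume a b) (hg : IntervalIntegrable g volume a b)
    (h1 : ∫ τ in a..b, g τ = 1) :
    ∫ τ in a..b, (∫ s in a..τ, A s) * g τ = ∫ τ in a..b, (1 - ∫ s in a..τ, g s) * A τ := by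
  have ha : a ∈ Set.uIcc a b := Set.left_mem_uIcc
  have cA := hA.absolutelyContinuousOnInterval_intervalIntegral ha
  have cg := hg.absolutelyContinuousOnInterval_intervalIntegral ha
  have key := cA.integral_mul_deriv_eq_deriv_mul cg
  have e1 : ∫ x in a..b, (∫ s in a..x, A s) * deriv (fun x => ∫ s in a..x, g s) x
      = ∫ x in a..b, (∫ s in a..x, A s) * g x := by
    apply intervalIntegral.integral_congr_ae
    filter_upwards [hg.ae_hasDerivAt_integral] with x hx hm
    rw [(hx (Set.uIoc_subset_uIcc hm) a ha).deriv]
  have e2 : ∫ x in a..b, deriv (fun x => ∫ s in a..x, A s) x * (∫ s in a..x, g s)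
      = ∫ x in a..b, A x * (∫ s in a..x, g s) := by
    apply intervalIntegral.integral_congr_ae
    filter_upwards [hA.ae_hasDerivAt_integral] with x hx hm
    rw [(hx (Set.uIoc_subset_uIcc hm) a ha).deriv]
  rw [e1, e2] at key
  rw [key, h1]
  simp only [intervalIntegral.integral_same, mul_one, mul_zero, sub_zero]
  rw [← intervalIntegral.integral_sub hA (hA.mul_continuousOn cg.continuousOn)]
  apply intervalIntegral.integral_congr
  intro x _
  simp only; ring

/-- Per-user payment identity (equation (45) in the proof of Lemma 2): under the
envelope condition for user j with monotone interim allocation, the expected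
payment of user j equals
−ṽ_j(a_j) + θ ∫_T [ t_j − (1 − F_j(t_j))/f_j(t_j) ] (∑_{i∈S_j} p_i(t)) f(t) dt. -/
theorem stmt_6 {n m : ℕ} (θ : ℝ) (hθ : 0 < θ)
    (a abar : Fin n → ℝ) (hab : ∀ j, a j < abar j)
    (f : Fin n → ℝ → ℝ)
    (hfmeas : ∀ j, Measurable (f j))
    (hfpos : ∀ j', ∀ t ∈ Set.Icc (a j') (abar j'), 0 < f j' t)
    (hfprob : ∀ j', ∫ t in Set.Icc (a j') (abar j'), f j' t = 1)
    (S : Fin n → Finset (Fin m))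
    (p : (Fin n → ℝ) → Fin m → ℝ) (hpmeas : Measurable p)
    (hFF : ∀ t ∈ Tspace a abar, (∀ i, 0 ≤ p t i) ∧ ∑ i, p t i ≤ 1)
    (x : (Fin n → ℝ) → Fin n → ℝ) (hxmeas : Measurable x)
    (j : Fin n)
    (hxint : IntegrableOn (fun t => x t j * jointDens f t) (Tspace a abar))
    (hmono : MonotoneOn (interimAlloc a abar f S p j) (Set.Icc (a j) (abar j)))
    (henv : ∀ t ∈ Set.Icc (a j) (abar j),
        vtld θ a abar f S p x j t
          = vtld θ a abar f S p x j (a j)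
            + θ * ∫ τ in (a j)..t, interimAlloc a abar f S p j τ) :
    ∫ t in Tspace a abar, x t j * jointDens f t
      = -(vtld θ a abar f S p x j (a j))
        + θ * ∫ t in Tspace a abar,
            (t j - (1 - ∫ τ in (a j)..(t j), f j τ) / f j (t j))
              * ((∑ i ∈ S j, p t i) * jointDens f t) := by
  classical
  set ν : Fin n → Measure ℝ := fun k => volume.restrict (Set.Icc (a k) (abar k)) with hν
  set μ : Fin n → Measure ℝ :=
    fun k => (ν k).withDensity (fun t => ENNReal.ofReal (f k t)) with hμ
  have hfi : ∀ k, Integrable (f k) (ν k) := by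
    intro k
    by_contra hc
    have h := hfprob k
    rw [integral_undef hc] at h
    exact zero_ne_one h
  have haeν : ∀ k, ∀ᵐ t ∂(ν k), t ∈ Set.Icc (a k) (abar k) := fun k =>
    ae_restrict_mem measurableSet_Icc
  have hprob : ∀ k, IsProbabilityMeasure (μ k) := by
    intro k
    refine ⟨?_⟩
    simp only [hμ]
    rw [withDensity_apply _ MeasurableSet.univ, Measure.restrict_univ,
      ← ofReal_integral_eq_lintegral_ofReal (hfi k), hfprob k, ENNReal.ofReal_one]
    filter_upwards [haeν k] with t ht using (hfpos k t ht).le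
  have hνT : Measure.pi ν = volume.restrict (Tspace a abar) := by
    rw [Tspace, volume_pi, Measure.restrict_pi_pi]
  have hTm : MeasurableSet (Tspace a abar) :=
    MeasurableSet.univ_pi fun k => measurableSet_Icc
  set P := Measure.pi μ with hPdef
  have hP : P = (volume.restrict (Tspace a abar)).withDensity
      (fun t => ∏ k, ENNReal.ofReal (f k (t k))) := by
    rw [← hνT]; exact aux_pi_withDensity ν f hfi
  have hwm : Measurable (fun t : Fin n → ℝ => ∏ k, ENNReal.ofReal (f k (t k))) :=
    Finset.measurable_prod _ fun k _ =>
      ((hfmeas k).comp (measurable_pi_apply k)).ennreal_ofReal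
  have hwlt : ∀ᵐ t ∂(volume.restrict (Tspace a abar)),
      (∏ k, ENNReal.ofReal (f k (t k))) < ⊤ :=
    Filter.Eventually.of_forall fun t => ENNReal.prod_lt_top fun k _ => ENNReal.ofReal_lt_top
  have hwr : ∀ t ∈ Tspace a abar, (∏ k, ENNReal.ofReal (f k (t k))).toReal = jointDens f t := by
    intro t ht
    rw [ENNReal.toReal_prod, jointDens]
    refine Finset.prod_congr rfl fun k _ => ENNReal.toReal_ofReal ?_
    exact (hfpos k _ (ht k (Set.mem_univ k))).le
  have convT : ∀ G : (Fin n → ℝ) → ℝ,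
      ∫ t in Tspace a abar, G t * jointDens f t = ∫ t, G t ∂P := by
    intro G
    rw [hP, integral_withDensity_eq_integral_toReal_smul hwm hwlt]
    refine setIntegral_congr_fun hTm fun t ht => ?_
    simp only [hwr t ht, smul_eq_mul, mul_comm]
  have convTi : ∀ G : (Fin n → ℝ) → ℝ,
      IntegrableOn (fun t => G t * jointDens f t) (Tspace a abar) → Integrable G P := by
    intro G hG
    rw [hP, integrable_withDensity_iff_integrable_smul' hwm hwlt]
    refine IntegrableOn.congr_fun hG (fun t ht => ?_) hTm
    simp only [hwr t ht, smul_eq_mul, mul_comm]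
  have conv1 : ∀ g : ℝ → ℝ, ∫ t, g t ∂(μ j) = ∫ t in (a j)..(abar j), g t * f j t := by
    intro g
    rw [intervalIntegral.integral_of_le (hab j).le, ← integral_Icc_eq_integral_Ioc]
    simp only [hμ]
    rw [integral_withDensity_eq_integral_toReal_smul (hfmeas j).ennreal_ofReal
      (Filter.Eventually.of_forall fun t => ENNReal.ofReal_lt_top)]
    refine setIntegral_congr_fun measurableSet_Icc fun t ht => ?_
    simp only [ENNReal.toReal_ofReal (hfpos j t ht).le, smul_eq_mul, mul_comm]
  have conv1i : ∀ g : ℝ → ℝ, Integrable g (μ j) ↔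
      IntervalIntegrable (fun t => g t * f j t) volume (a j) (abar j) := by
    intro g
    rw [intervalIntegrable_iff_integrableOn_Icc_of_le (hab j).le]
    simp only [hμ]
    rw [integrable_withDensity_iff_integrable_smul' (hfmeas j).ennreal_ofReal
      (Filter.Eventually.of_forall fun t => ENNReal.ofReal_lt_top)]
    refine integrableOn_congr_fun (fun t ht => ?_) measurableSet_Icc
    simp only [ENNReal.toReal_ofReal (hfpos j t ht).le, smul_eq_mul, mul_comm]
  have huI : Set.uIcc (a j) (abar j) = Set.Icc (a j) (abar j) := Set.uIcc_of_le (hab j).le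
  have haj : a j ∈ Set.uIcc (a j) (abar j) := Set.left_mem_uIcc
  -- basic objects
  set σ : (Fin n → ℝ) → ℝ := fun t => ∑ i ∈ S j, p t i with hσ
  set A : ℝ → ℝ := interimAlloc a abar f S p j with hAdef
  have hA : ∀ τ, A τ = ∫ t, σ (Function.update t j τ) ∂P := fun τ => convT _
  have hPay : ∀ τ, interimPay a abar f x j τ = ∫ t, x (Function.update t j τ) j ∂P :=
    fun τ => convT (fun t => x (Function.update t j τ) j)
  have haeP : ∀ᵐ t ∂P, t ∈ Tspace a abar := by
    have h : P ≪ volume.restrict (Tspace a abar) := by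
      rw [hP]; exact withDensity_absolutelyContinuous _ _
    exact h.ae_le (ae_restrict_mem hTm)
  have hσm : Measurable σ :=
    Finset.measurable_sum _ fun i _ => (measurable_pi_apply i).comp hpmeas
  have hσb : ∀ᵐ t ∂P, ‖σ t‖ ≤ 1 := by
    filter_upwards [haeP] with t ht
    have h0 := hFF t ht
    rw [Real.norm_of_nonneg (Finset.sum_nonneg fun i _ => h0.1 i)]
    exact (Finset.sum_le_sum_of_subset_of_nonneg (Finset.subset_univ _)
      fun i _ _ => h0.1 i).trans h0.2
  have hσi : Integrable σ P := Integrable.of_bound hσm.aestronglyMeasurable 1 hσb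
  have hfI : IntervalIntegrable (f j) volume (a j) (abar j) :=
    (intervalIntegrable_iff_integrableOn_Icc_of_le (hab j).le).2 (hfi j)
  have hAI : IntervalIntegrable A volume (a j) (abar j) :=
    (intervalIntegrable_iff_integrableOn_Icc_of_le (hab j).le).2
      (hmono.integrableOn_isCompact isCompact_Icc)
  have hAf : IntervalIntegrable (fun τ => A τ * f j τ) volume (a j) (abar j) := by
    rw [← conv1i]
    have h := (aux_fubini μ j σ hσi).1
    simp_rw [← hPdef, ← hA] at h
    exact h
  have hf1 : ∫ τ in (a j)..(abar j), f j τ = 1 := by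
    rw [intervalIntegral.integral_of_le (hab j).le, ← integral_Icc_eq_integral_Ioc]
    exact hfprob j
  have cF := (hfI.absolutelyContinuousOnInterval_intervalIntegral haj).continuousOn
  have cA := (hAI.absolutelyContinuousOnInterval_intervalIntegral haj).continuousOn
  have hparts := aux_parts A (f j) (a j) (abar j) hAI hfI hf1
  have i1 : IntervalIntegrable (fun τ => τ * (A τ * f j τ)) volume (a j) (abar j) :=
    hAf.continuousOn_mul continuousOn_id
  have i2 : IntervalIntegrable (fun τ => (1 - ∫ s in (a j)..τ, f j s) * A τ)
      volume (a j) (abar j) := hAI.continuousOn_mul (continuousOn_const.sub cF)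
  have i3 : IntervalIntegrable (fun τ => (∫ s in (a j)..τ, A s) * f j τ)
      volume (a j) (abar j) := hfI.continuousOn_mul cA
  -- left-hand side
  have hL : ∫ t, x t j ∂P = θ * (∫ τ in (a j)..(abar j), τ * (A τ * f j τ))
      - vtld θ a abar f S p x j (a j)
      - θ * ∫ τ in (a j)..(abar j), (∫ s in (a j)..τ, A s) * f j τ := by
    rw [(aux_fubini μ j (fun t => x t j) (convTi _ hxint)).2]
    simp_rw [← hPdef, ← hPay]
    rw [conv1]
    have e : ∫ τ in (a j)..(abar j), interimPay a abar f x j τ * f j τ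
        = ∫ τ in (a j)..(abar j), (θ * (τ * (A τ * f j τ))
          - vtld θ a abar f S p x j (a j) * f j τ
          - θ * ((∫ s in (a j)..τ, A s) * f j τ)) := by
      apply intervalIntegral.integral_congr
      intro τ hτ
      have h := henv τ (huI ▸ hτ)
      have h' : interimPay a abar f x j τ = θ * τ * A τ - vtld θ a abar f S p x j τ := by
        simp only [vtld, hAdef]; ring
      simp only [h', h]; ring
    rw [e, intervalIntegral.integral_sub ((i1.const_mul θ).sub (hfI.const_mul _))
      (i3.const_mul θ), intervalIntegral.integral_sub (i1.const_mul θ) (hfI.const_mul _)]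
    simp only [intervalIntegral.integral_const_mul, hf1, mul_one]
  -- right-hand side
  set c : ℝ → ℝ := fun s => s - (1 - ∫ τ in (a j)..s, f j τ) / f j s with hc
  have hcf : ∀ τ ∈ Set.uIcc (a j) (abar j),
      c τ * f j τ = τ * f j τ - (1 - ∫ s in (a j)..τ, f j s) := by
    intro τ hτ
    have hne := (hfpos j τ (huI ▸ hτ)).ne'
    simp only [hc]
    field_simp
  have hci : Integrable c (μ j) := by
    rw [conv1i]
    refine IntervalIntegrable.congr (f := fun τ => τ * f j τ - (1 - ∫ s in (a j)..τ, f j s))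
      (fun τ hτ => (hcf τ (Set.uIoc_subset_uIcc hτ)).symm) ?_
    exact (hfI.continuousOn_mul continuousOn_id).sub
      (continuousOn_const.sub cF).intervalIntegrable
  have hWi : Integrable (fun t => c (t j) * σ t) P :=
    Integrable.mul_bdd (c := 1) ((measurePreserving_eval μ j).integrable_comp_of_integrable hci)
      hσm.aestronglyMeasurable hσb
  have hR : ∫ t, c (t j) * σ t ∂P = (∫ τ in (a j)..(abar j), τ * (A τ * f j τ))
      - ∫ τ in (a j)..(abar j), (1 - ∫ s in (a j)..τ, f j s) * A τ := by
    rw [(aux_fubini μ j _ hWi).2]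
    simp only [Function.update_self, integral_const_mul]
    simp_rw [← hPdef, ← hA]
    rw [conv1, ← intervalIntegral.integral_sub i1 i2]
    apply intervalIntegral.integral_congr
    intro τ hτ
    have h := hcf τ hτ
    simp only
    rw [mul_right_comm, h]; ring
  have hR' : ∫ t in Tspace a abar,
            (t j - (1 - ∫ τ in (a j)..(t j), f j τ) / f j (t j))
              * ((∑ i ∈ S j, p t i) * jointDens f t) = ∫ t, c (t j) * σ t ∂P := by
    rw [← convT]
    congr 1
    funext t
    simp only [hc, hσ]; ring
  rw [hR', hR, convT (fun t => x t j), hL, hparts]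
  ring

end Caching
end

section
/- Suppose the mechanism (p, x) satisfies fraction feasibility (FF), each x_j is integrable, and conditions (i)–(ii) of Lemma 1 hold (each p̃_j is monotone increasing and ṽ_j(t) = ṽ_j(a_j) + θ ∫_{a_j}^{t} p̃_j(τ) dτ for all t ∈ T_j and all j). Then the expected revenue satisfies ER = −∑_{j=1}^n ṽ_j(a_j) + θ ∫_T { ∑_{j=1}^n [ t_j − (1 − F_j(t_j))/f_j(t_j) − h(θ)/θ ] (∑_{i∈S_j} p_i(t)) } f(t) dt − ∫_T [ ∑_{i=1}^m p_i(t) r_i ] f(t) dt. (Lemma 2.) -/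
open MeasureTheory Finset

noncomputable section Caching

/-- The law of user j's type. -/
def muj {n : ℕ} (a abar : Fin n → ℝ) (f : Fin n → ℝ → ℝ) (j : Fin n) : Measure ℝ :=
  (volume.restrict (Set.Icc (a j) (abar j))).withDensity (fun t => ENNReal.ofReal (f j t))

section aux
variable {n : ℕ} (a abar : Fin n → ℝ) (f : Fin n → ℝ → ℝ)
    (hfmeas : ∀ j, Measurable (f j))
    (hfpos : ∀ j, ∀ t ∈ Set.Icc (a j) (abar j), 0 < f j t)
    (hfprob : ∀ j, ∫ t in Set.Icc (a j) (abar j), f j t = 1)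

lemma f_int (hfprob : ∀ j, ∫ t in Set.Icc (a j) (abar j), f j t = 1) (j : Fin n) :
    Integrable (f j) (volume.restrict (Set.Icc (a j) (abar j))) := by
  by_contra h
  have := hfprob j
  rw [integral_undef h] at this
  exact zero_ne_one this

lemma f_ae (hfpos : ∀ j, ∀ t ∈ Set.Icc (a j) (abar j), 0 < f j t) (j : Fin n) :
    ∀ᵐ t ∂(volume.restrict (Set.Icc (a j) (abar j))), 0 < f j t := by
  filter_upwards [ae_restrict_mem measurableSet_Icc] with t ht using hfpos j t ht

lemma muj_prob (hfpos : ∀ j, ∀ t ∈ Set.Icc (a j) (abar j), 0 < f j t)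
    (hfprob : ∀ j, ∫ t in Set.Icc (a j) (abar j), f j t = 1) (j : Fin n) :
    IsProbabilityMeasure (muj a abar f j) := by
  constructor
  rw [muj, withDensity_apply _ MeasurableSet.univ, Measure.restrict_univ,
    ← ofReal_integral_eq_lintegral_ofReal (f_int a abar f hfprob j), hfprob j, ENNReal.ofReal_one]
  filter_upwards [f_ae a abar f hfpos j] with t ht using ht.le

lemma jointDens_meas (hfmeas : ∀ j, Measurable (f j)) : Measurable (jointDens f) := by
  unfold jointDens
  exact Finset.measurable_prod _ fun j _ => (hfmeas j).comp (measurable_pi_apply j)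

lemma Tspace_meas : MeasurableSet (Tspace a abar) :=
  MeasurableSet.univ_pi fun _ => measurableSet_Icc

lemma jointDens_pos (hfpos : ∀ j, ∀ t ∈ Set.Icc (a j) (abar j), 0 < f j t)
    (t : Fin n → ℝ) (ht : t ∈ Tspace a abar) : 0 < jointDens f t :=
  Finset.prod_pos fun j _ => hfpos j _ (ht j (Set.mem_univ j))

lemma pi_muj 
    (hfpos : ∀ j, ∀ t ∈ Set.Icc (a j) (abar j), 0 < f j t)
    (hfprob : ∀ j, ∫ t in Set.Icc (a j) (abar j), f j t = 1) :
    Measure.pi (muj a abar f) =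
      (volume.restrict (Tspace a abar)).withDensity (fun t => ENNReal.ofReal (jointDens f t)) := by
  have := muj_prob a abar f hfpos hfprob
  refine Measure.pi_eq (fun s hs => ?_)
  rw [withDensity_apply _ (MeasurableSet.univ_pi hs)]
  have e1 : (volume.restrict (Tspace a abar)).restrict (Set.univ.pi s)
      = Measure.pi (fun j => (volume.restrict (Set.Icc (a j) (abar j))).restrict (s j)) := by
    rw [Tspace, volume_pi, Measure.restrict_pi_pi, Measure.restrict_pi_pi]
  have hint : ∀ j, Integrable (f j) ((volume.restrict (Set.Icc (a j) (abar j))).restrict (s j)) :=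
    fun j => (f_int a abar f hfprob j).restrict
  have hnn : ∀ j, 0 ≤ᵐ[(volume.restrict (Set.Icc (a j) (abar j))).restrict (s j)] f j := fun j => by
    filter_upwards [ae_restrict_of_ae (f_ae a abar f hfpos j)] with t ht using ht.le
  rw [← ofReal_integral_eq_lintegral_ofReal]
  · rw [e1]
    unfold jointDens
    rw [integral_fintype_prod_eq_prod (𝕜 := ℝ), ENNReal.ofReal_prod_of_nonneg]
    · refine Finset.prod_congr rfl fun j _ => ?_
      rw [muj, withDensity_apply _ (hs j), ofReal_integral_eq_lintegral_ofReal (hint j) (hnn j)]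
    · exact fun j _ => integral_nonneg_of_ae (hnn j)
  · rw [e1]
    exact Integrable.fintype_prod_dep (𝕜 := ℝ) hint
  · filter_upwards [ae_restrict_of_ae (ae_restrict_mem (Tspace_meas a abar))] with t ht
      using (jointDens_pos a abar f hfpos t ht).le

lemma integral_T (hfmeas : ∀ j, Measurable (f j))
    (hfpos : ∀ j, ∀ t ∈ Set.Icc (a j) (abar j), 0 < f j t)
    (hfprob : ∀ j, ∫ t in Set.Icc (a j) (abar j), f j t = 1) (g : (Fin n → ℝ) → ℝ) :
    ∫ t in Tspace a abar, g t * jointDens f t = ∫ t, g t ∂(Measure.pi (muj a abar f)) := by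
  rw [pi_muj a abar f hfpos hfprob, integral_withDensity_eq_integral_toReal_smul
    (jointDens_meas f hfmeas).ennreal_ofReal (by simp)]
  refine setIntegral_congr_fun (Tspace_meas a abar) fun t ht => ?_
  simp only [smul_eq_mul]
  rw [ENNReal.toReal_ofReal (jointDens_pos a abar f hfpos t ht).le, mul_comm]

lemma integrable_T (hfmeas : ∀ j, Measurable (f j))
    (hfpos : ∀ j, ∀ t ∈ Set.Icc (a j) (abar j), 0 < f j t)
    (hfprob : ∀ j, ∫ t in Set.Icc (a j) (abar j), f j t = 1) (g : (Fin n → ℝ) → ℝ)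
    (h : IntegrableOn (fun t => g t * jointDens f t) (Tspace a abar)) :
    Integrable g (Measure.pi (muj a abar f)) := by
  rw [pi_muj a abar f hfpos hfprob, integrable_withDensity_iff_integrable_smul'
    (jointDens_meas f hfmeas).ennreal_ofReal (by simp)]
  refine (IntegrableOn.congr_fun h (fun t ht => ?_) (Tspace_meas a abar))
  simp only [smul_eq_mul]
  rw [ENNReal.toReal_ofReal (jointDens_pos a abar f hfpos t ht).le, mul_comm]

lemma integral_muj (hfmeas : ∀ j, Measurable (f j))
    (hfpos : ∀ j, ∀ t ∈ Set.Icc (a j) (abar j), 0 < f j t) (j : Fin n) (g : ℝ → ℝ) :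
    ∫ t, g t ∂(muj a abar f j) = ∫ t in Set.Icc (a j) (abar j), g t * f j t := by
  rw [muj, integral_withDensity_eq_integral_toReal_smul (hfmeas j).ennreal_ofReal (by simp)]
  refine setIntegral_congr_fun measurableSet_Icc fun t ht => ?_
  simp only [smul_eq_mul]
  rw [ENNReal.toReal_ofReal (hfpos j t ht).le, mul_comm]

lemma integrable_muj (hfmeas : ∀ j, Measurable (f j))
    (hfpos : ∀ j, ∀ t ∈ Set.Icc (a j) (abar j), 0 < f j t) (j : Fin n) (g : ℝ → ℝ)
    (h : IntegrableOn (fun t => g t * f j t) (Set.Icc (a j) (abar j))) :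
    Integrable g (muj a abar f j) := by
  rw [muj, integrable_withDensity_iff_integrable_smul' (hfmeas j).ennreal_ofReal (by simp)]
  refine IntegrableOn.congr_fun h (fun t ht => ?_) measurableSet_Icc
  simp only [smul_eq_mul]
  rw [ENNReal.toReal_ofReal (hfpos j t ht).le, mul_comm]

lemma muj_mem (j : Fin n) : ∀ᵐ t ∂(muj a abar f j), t ∈ Set.Icc (a j) (abar j) :=
  (withDensity_absolutelyContinuous _ _).ae_le (ae_restrict_mem measurableSet_Icc)

lemma pi_mem (hfpos : ∀ j, ∀ t ∈ Set.Icc (a j) (abar j), 0 < f j t)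
    (hfprob : ∀ j, ∫ t in Set.Icc (a j) (abar j), f j t = 1) :
    ∀ᵐ t ∂(Measure.pi (muj a abar f)), t ∈ Tspace a abar := by
  rw [pi_muj a abar f hfpos hfprob]
  exact (withDensity_absolutelyContinuous _ _).ae_le (ae_restrict_mem (Tspace_meas a abar))

lemma mp_update (μ : Fin n → Measure ℝ) [∀ j, IsProbabilityMeasure (μ j)] (j : Fin n) :
    MeasurePreserving (fun z : ℝ × (Fin n → ℝ) => Function.update z.2 j z.1)
      ((μ j).prod (Measure.pi μ)) (Measure.pi μ) := by
  have hm : Measurable (fun z : ℝ × (Fin n → ℝ) => Function.update z.2 j z.1) := by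
    refine measurable_pi_lambda _ fun i => ?_
    by_cases h : i = j
    · subst h; simpa using measurable_fst
    · simp only [Function.update_of_ne h]; fun_prop
  refine ⟨hm, (Measure.pi_eq fun s hs => ?_).symm⟩
  rw [Measure.map_apply hm (MeasurableSet.univ_pi hs)]
  have : (fun z : ℝ × (Fin n → ℝ) => Function.update z.2 j z.1) ⁻¹' (Set.univ.pi s)
      = (s j) ×ˢ (Set.univ.pi (Function.update s j Set.univ)) := by
    ext z
    simp only [Set.mem_preimage, Set.mem_pi, Set.mem_univ, true_imp_iff, Set.mem_prod]
    constructor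
    · intro h
      refine ⟨by simpa using h j, fun i => ?_⟩
      by_cases hi : i = j
      · subst hi; simp
      · have := h i
        rw [Function.update_of_ne hi] at this ⊢; exact this
    · rintro ⟨h1, h2⟩ i
      by_cases hi : i = j
      · subst hi; simpa using h1
      · have := h2 i
        rw [Function.update_of_ne hi] at this ⊢; exact this
  rw [this, Measure.prod_prod, Measure.pi_pi, ← Finset.mul_prod_erase _ _ (Finset.mem_univ j),
    ← Finset.mul_prod_erase (a := j) Finset.univ (fun i => μ i (s i)) (Finset.mem_univ j)]
  simp only [Function.update_self, measure_univ, one_mul]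
  congr 1
  refine Finset.prod_congr rfl fun i hi => ?_
  rw [Function.update_of_ne (Finset.ne_of_mem_erase hi)]

lemma fubini_update (μ : Fin n → Measure ℝ) [∀ j, IsProbabilityMeasure (μ j)] (j : Fin n)
    (g : (Fin n → ℝ) → ℝ) (hg : Integrable g (Measure.pi μ)) :
    ∫ t, g t ∂(Measure.pi μ) = ∫ τ, (∫ t, g (Function.update t j τ) ∂(Measure.pi μ)) ∂(μ j) := by
  have mp := mp_update μ j
  conv_lhs => rw [← mp.map_eq]
  rw [integral_map mp.measurable.aemeasurable (by rw [mp.map_eq]; exact hg.aestronglyMeasurable)]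
  exact integral_prod _ ((mp.integrable_comp hg.aestronglyMeasurable).2 hg)

lemma fubini_int (μ : Fin n → Measure ℝ) [∀ j, IsProbabilityMeasure (μ j)] (j : Fin n)
    (g : (Fin n → ℝ) → ℝ) (hg : Integrable g (Measure.pi μ)) :
    Integrable (fun τ => ∫ t, g (Function.update t j τ) ∂(Measure.pi μ)) (μ j) := by
  have mp := mp_update μ j
  exact ((mp.integrable_comp hg.aestronglyMeasurable).2 hg).integral_prod_left

end aux
lemma swap1 (a b : ℝ) (P f : ℝ → ℝ) (hP : IntegrableOn P (Set.Icc a b))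
    (hf : IntegrableOn f (Set.Icc a b)) (hf1 : ∫ t in Set.Icc a b, f t = 1) :
    IntegrableOn (fun τ => (∫ s in a..τ, P s) * f τ) (Set.Icc a b) ∧
    ∫ τ in Set.Icc a b, (∫ s in a..τ, P s) * f τ
      = ∫ s in Set.Icc a b, P s * (1 - ∫ τ in a..s, f τ) := by
  set ν := (volume : Measure ℝ).restrict (Set.Icc a b) with hν
  let A : Set (ℝ × ℝ) := {z | z.2 ≤ z.1}
  have hA : MeasurableSet A := measurableSet_le measurable_snd measurable_fst
  let K : ℝ × ℝ → ℝ := A.indicator (fun z => f z.1 * P z.2)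
  have hK : Integrable K (ν.prod ν) := (Integrable.mul_prod hf hP).indicator hA
  have h1 : ∀ τ ∈ Set.Icc a b, ∫ s, K (τ, s) ∂ν = (∫ s in a..τ, P s) * f τ := by
    intro τ hτ
    have : (fun s => K (τ, s)) = (Set.Iic τ).indicator (fun s => f τ * P s) := by
      ext s
      simp [K, A, Set.indicator_apply]
    rw [this, setIntegral_indicator measurableSet_Iic, integral_const_mul, mul_comm,
      intervalIntegral.integral_of_le hτ.1, ← integral_Icc_eq_integral_Ioc]
    congr 3
    ext s
    simp only [Set.mem_inter_iff, Set.mem_Icc, Set.mem_Iic]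
    constructor
    · rintro ⟨⟨h, _⟩, h'⟩; exact ⟨h, h'⟩
    · rintro ⟨h, h'⟩; exact ⟨⟨h, h'.trans hτ.2⟩, h'⟩
  have h2 : ∀ s ∈ Set.Icc a b, ∫ τ, K (τ, s) ∂ν = P s * (1 - ∫ τ in a..s, f τ) := by
    intro s hs
    have hfi : ∀ c ∈ Set.Icc a b, ∀ d ∈ Set.Icc a b, IntervalIntegrable f volume c d := by
      intro c hc d hd
      refine (hf.mono_set ?_).intervalIntegrable
      exact Set.uIcc_subset_Icc hc hd
    have hab : a ≤ b := hs.1.trans hs.2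
    have e : 1 - ∫ τ in a..s, f τ = ∫ τ in s..b, f τ := by
      rw [← hf1, integral_Icc_eq_integral_Ioc, ← intervalIntegral.integral_of_le hab,
        ← intervalIntegral.integral_add_adjacent_intervals (hfi a ⟨le_rfl, hab⟩ s hs)
          (hfi s hs b ⟨hab, le_rfl⟩)]
      ring
    have : (fun τ => K (τ, s)) = (Set.Ici s).indicator (fun τ => f τ * P s) := by
      ext τ
      simp [K, A, Set.indicator_apply]
    rw [this, setIntegral_indicator measurableSet_Ici, integral_mul_const, mul_comm, e,
      intervalIntegral.integral_of_le hs.2, ← integral_Icc_eq_integral_Ioc]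
    congr 3
    ext τ
    simp only [Set.mem_inter_iff, Set.mem_Icc, Set.mem_Ici]
    constructor
    · rintro ⟨⟨_, h⟩, h'⟩; exact ⟨h', h⟩
    · rintro ⟨h, h'⟩; exact ⟨⟨hs.1.trans h, h'⟩, h⟩
  refine ⟨IntegrableOn.congr_fun hK.integral_prod_left (fun τ hτ => h1 τ hτ) measurableSet_Icc, ?_⟩
  rw [← setIntegral_congr_fun measurableSet_Icc h1, ← setIntegral_congr_fun measurableSet_Icc h2]
  exact integral_integral_swap (f := fun τ s => K (τ, s)) hK

section aux2
variable {n m : ℕ} (θ : ℝ)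
    (a abar : Fin n → ℝ)
    (f : Fin n → ℝ → ℝ)
    (hfmeas : ∀ j, Measurable (f j))
    (hfpos : ∀ j, ∀ t ∈ Set.Icc (a j) (abar j), 0 < f j t)
    (hfprob : ∀ j, ∫ t in Set.Icc (a j) (abar j), f j t = 1)
    (S : Fin n → Finset (Fin m))
    (p : (Fin n → ℝ) → Fin m → ℝ) (hpmeas : Measurable p)
    (hFF : ∀ t ∈ Tspace a abar, (∀ i, 0 ≤ p t i) ∧ ∑ i, p t i ≤ 1)

include hfpos hfprob hFF in
lemma p_bdd (i : Fin m) : ∀ᵐ t ∂(Measure.pi (muj a abar f)), ‖p t i‖ ≤ 1 := by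
  filter_upwards [pi_mem a abar f hfpos hfprob] with t ht
  obtain ⟨h0, h1⟩ := hFF t ht
  rw [Real.norm_of_nonneg (h0 i)]
  exact (Finset.single_le_sum (fun i _ => h0 i) (Finset.mem_univ i)).trans h1

include hfpos hfprob hFF in
lemma q_bdd (j : Fin n) : ∀ᵐ t ∂(Measure.pi (muj a abar f)), ‖∑ i ∈ S j, p t i‖ ≤ 1 := by
  filter_upwards [pi_mem a abar f hfpos hfprob] with t ht
  obtain ⟨h0, h1⟩ := hFF t ht
  rw [Real.norm_of_nonneg (Finset.sum_nonneg fun i _ => h0 i)]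
  exact (Finset.sum_le_sum_of_subset_of_nonneg (Finset.subset_univ _) (fun i _ _ => h0 i)).trans h1

include hpmeas in
lemma q_meas (j : Fin n) : Measurable (fun t => ∑ i ∈ S j, p t i) :=
  Finset.measurable_sum _ fun i _ => (measurable_pi_apply i).comp hpmeas

include hfpos hfprob hpmeas hFF in
lemma gq_int (j : Fin n) (g : ℝ → ℝ) (hg : Integrable g (muj a abar f j)) :
    Integrable (fun t => g (t j) * ∑ i ∈ S j, p t i) (Measure.pi (muj a abar f)) := by
  have := muj_prob a abar f hfpos hfprob
  have h1 : Integrable (fun t : Fin n → ℝ => g (t j)) (Measure.pi (muj a abar f)) :=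
    integrable_comp_eval hg
  exact h1.mul_bdd (q_meas S p hpmeas j).aestronglyMeasurable
    (q_bdd a abar f hfpos hfprob S p hFF j)

include hfmeas hfpos hfprob hpmeas hFF in
lemma gq_integral (j : Fin n) (g : ℝ → ℝ) (hg : Integrable g (muj a abar f j)) :
    ∫ t, g (t j) * ∑ i ∈ S j, p t i ∂(Measure.pi (muj a abar f))
      = ∫ τ, g τ * interimAlloc a abar f S p j τ ∂(muj a abar f j) ∧
    Integrable (fun τ => g τ * interimAlloc a abar f S p j τ) (muj a abar f j) := by
  have := muj_prob a abar f hfpos hfprob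
  have h := gq_int a abar f hfpos hfprob S p hpmeas hFF j g hg
  have e : (fun τ => g τ * interimAlloc a abar f S p j τ) =
      fun τ => ∫ t, g (Function.update t j τ j) * ∑ i ∈ S j, p (Function.update t j τ) i
        ∂(Measure.pi (muj a abar f)) := by
    ext τ
    simp only [Function.update_self]
    rw [integral_const_mul, interimAlloc, integral_T a abar f hfmeas hfpos hfprob]
  rw [e]
  exact ⟨fubini_update _ j _ h, fubini_int _ j _ h⟩

include hfpos hfprob in
lemma id_int (j : Fin n) : Integrable (fun τ => τ) (muj a abar f j) := by
  have := muj_prob a abar f hfpos hfprob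
  refine Integrable.of_bound measurable_id.aestronglyMeasurable (max |a j| |abar j|) ?_
  filter_upwards [muj_mem a abar f j] with t ht
  exact abs_le_max_abs_abs ht.1 ht.2

include hfmeas hfpos hfprob in
lemma hz_int (j : Fin n) :
    Integrable (fun τ => (1 - ∫ s in (a j)..τ, f j s) / f j τ) (muj a abar f j) := by
  refine integrable_muj a abar f hfmeas hfpos j _ ?_
  have : ContinuousOn (fun τ => 1 - ∫ s in (a j)..τ, f j s) (Set.Icc (a j) (abar j)) := by
    rcases le_or_gt (a j) (abar j) with h | h
    · have hi := f_int a abar f hfprob j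
      rw [← Set.uIcc_of_le h] at hi ⊢
      exact continuousOn_const.sub (intervalIntegral.continuousOn_primitive_interval hi)
    · rw [Set.Icc_eq_empty (not_le.2 h)]
      exact continuousOn_empty _
  refine (this.integrableOn_Icc).congr_fun (fun t ht => ?_) measurableSet_Icc
  have := (hfpos j t ht).ne'
  field_simp

include hfmeas hfpos hfprob hpmeas hFF in
lemma key (j : Fin n) (x : (Fin n → ℝ) → Fin n → ℝ)
    (hxint : Integrable (fun t => x t j) (Measure.pi (muj a abar f)))
    (hmono : MonotoneOn (interimAlloc a abar f S p j) (Set.Icc (a j) (abar j)))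
    (henv : ∀ t ∈ Set.Icc (a j) (abar j),
        vtld θ a abar f S p x j t
          = vtld θ a abar f S p x j (a j)
            + θ * ∫ τ in (a j)..t, interimAlloc a abar f S p j τ) :
    ∫ t, x t j ∂(Measure.pi (muj a abar f)) = - vtld θ a abar f S p x j (a j)
      + θ * ∫ t, (t j - (1 - ∫ τ in (a j)..(t j), f j τ) / f j (t j))
              * (∑ i ∈ S j, p t i) ∂(Measure.pi (muj a abar f)) := by
  have := muj_prob a abar f hfpos hfprob
  have hid := id_int a abar f hfpos hfprob j
  have hhz := hz_int a abar f hfmeas hfpos hfprob j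
  obtain ⟨_, i1⟩ := gq_integral a abar f hfmeas hfpos hfprob S p hpmeas hFF j _ hid
  obtain ⟨_, i2⟩ := gq_integral a abar f hfmeas hfpos hfprob S p hpmeas hFF j _ hhz
  obtain ⟨e3, _⟩ := gq_integral a abar f hfmeas hfpos hfprob S p hpmeas hFF j _ (hid.sub hhz)
  simp only [Pi.sub_apply] at e3
  obtain ⟨i4, e4⟩ := swap1 (a j) (abar j) _ (f j) (hmono.integrableOn_isCompact isCompact_Icc)
    (f_int a abar f hfprob j) (hfprob j)
  have i5 := integrable_muj a abar f hfmeas hfpos j _ i4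
  have e5 : ∫ τ, (∫ s in (a j)..τ, interimAlloc a abar f S p j s) ∂(muj a abar f j)
      = ∫ τ, ((1 - ∫ s in (a j)..τ, f j s) / f j τ) * interimAlloc a abar f S p j τ
        ∂(muj a abar f j) := by
    rw [integral_muj a abar f hfmeas hfpos, integral_muj a abar f hfmeas hfpos, e4]
    refine setIntegral_congr_fun measurableSet_Icc fun t ht => ?_
    have := (hfpos j t ht).ne'
    field_simp
  rw [e3, fubini_update _ j _ hxint]
  have e6 : ∫ τ, (∫ t, x (Function.update t j τ) j ∂(Measure.pi (muj a abar f))) ∂(muj a abar f j)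
      = ∫ τ, (θ * (τ * interimAlloc a abar f S p j τ) - vtld θ a abar f S p x j (a j)
        - θ * ∫ s in (a j)..τ, interimAlloc a abar f S p j s) ∂(muj a abar f j) := by
    refine integral_congr_ae ?_
    filter_upwards [muj_mem a abar f j] with τ hτ
    have h := henv τ hτ
    rw [← integral_T a abar f hfmeas hfpos hfprob]
    change interimPay a abar f x j τ = _
    have h' : vtld θ a abar f S p x j τ = θ * τ * interimAlloc a abar f S p j τ
      - interimPay a abar f x j τ := rfl
    linarith
  have i7 : Integrable (fun τ => θ * (τ * interimAlloc a abar f S p j τ)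
      - vtld θ a abar f S p x j (a j)) (muj a abar f j) :=
    (i1.const_mul θ).sub (integrable_const _)
  rw [e6, integral_sub i7 (i5.const_mul θ),
    integral_sub (i1.const_mul θ) (integrable_const _), integral_const_mul, integral_const_mul, e5]
  simp only [sub_mul]
  rw [integral_sub i1 i2]
  simp
  ring

end aux2
/-- Lemma 2: for a feasible mechanism satisfying conditions (i)–(ii) of Lemma 1,
the expected revenue

  ER = ∫_T [ ∑_j x_j(t) − ∑_i p_i(t) r_i − ∑_i p_i(t) |Ω_i| h(θ) ] f(t) dt

can be rewritten as
  −∑_j ṽ_j(a_j)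
  + θ ∫_T { ∑_j [ t_j − (1 − F_j(t_j))/f_j(t_j) − h(θ)/θ ] (∑_{i∈S_j} p_i(t)) } f(t) dt
  − ∫_T [ ∑_i p_i(t) r_i ] f(t) dt. -/
theorem stmt_7 {n m : ℕ} (θ hval : ℝ) (hθ : 0 < θ) (hh : 0 ≤ hval)
    (r : Fin m → ℝ)
    (a abar : Fin n → ℝ) (hab : ∀ j, a j < abar j)
    (f : Fin n → ℝ → ℝ)
    (hfmeas : ∀ j, Measurable (f j))
    (hfpos : ∀ j, ∀ t ∈ Set.Icc (a j) (abar j), 0 < f j t)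
    (hfprob : ∀ j, ∫ t in Set.Icc (a j) (abar j), f j t = 1)
    (S : Fin n → Finset (Fin m))
    (p : (Fin n → ℝ) → Fin m → ℝ) (hpmeas : Measurable p)
    (hFF : ∀ t ∈ Tspace a abar, (∀ i, 0 ≤ p t i) ∧ ∑ i, p t i ≤ 1)
    (x : (Fin n → ℝ) → Fin n → ℝ) (hxmeas : Measurable x)
    (hxint : ∀ j, IntegrableOn (fun t => x t j * jointDens f t) (Tspace a abar))
    (hmono : ∀ j, MonotoneOn (interimAlloc a abar f S p j) (Set.Icc (a j) (abar j)))
    (henv : ∀ j, ∀ t ∈ Set.Icc (a j) (abar j),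
        vtld θ a abar f S p x j t
          = vtld θ a abar f S p x j (a j)
            + θ * ∫ τ in (a j)..t, interimAlloc a abar f S p j τ) :
    ∫ t in Tspace a abar,
        (∑ j, x t j - ∑ i, p t i * r i
          - ∑ i, p t i * ((Finset.univ.filter fun j => i ∈ S j).card : ℝ) * hval)
          * jointDens f t
      = -(∑ j, vtld θ a abar f S p x j (a j))
        + θ * (∫ t in Tspace a abar,
            (∑ j, (t j - (1 - ∫ τ in (a j)..(t j), f j τ) / f j (t j) - hval / θ)
              * (∑ i ∈ S j, p t i)) * jointDens f t)
        - ∫ t in Tspace a abar, (∑ i, p t i * r i) * jointDens f t := by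
  have := muj_prob a abar f hfpos hfprob
  simp only [integral_T a abar f hfmeas hfpos hfprob]
  have hx : ∀ j, Integrable (fun t => x t j) (Measure.pi (muj a abar f)) := fun j =>
    integrable_T a abar f hfmeas hfpos hfprob _ (hxint j)
  have hp : ∀ i, Integrable (fun t => p t i) (Measure.pi (muj a abar f)) := fun i =>
    Integrable.of_bound ((measurable_pi_apply i).comp hpmeas).aestronglyMeasurable 1
      (p_bdd a abar f hfpos hfprob p hFF i)
  have hq : ∀ j, Integrable (fun t => ∑ i ∈ S j, p t i) (Measure.pi (muj a abar f)) := fun j =>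
    integrable_finsetSum _ fun i _ => hp i
  have hg : ∀ j, Integrable (fun t => (t j - (1 - ∫ τ in (a j)..(t j), f j τ) / f j (t j))
              * (∑ i ∈ S j, p t i)) (Measure.pi (muj a abar f)) := fun j =>
    gq_int a abar f hfpos hfprob S p hpmeas hFF j _
      ((id_int a abar f hfpos hfprob j).sub (hz_int a abar f hfmeas hfpos hfprob j))
  have hk := fun j => key θ a abar f hfmeas hfpos hfprob S p hpmeas hFF j x (hx j) (hmono j)
    (henv j)
  have hc : ∀ t, ∑ i, p t i * ((Finset.univ.filter fun j => i ∈ S j).card : ℝ) * hval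
      = hval * ∑ j, ∑ i ∈ S j, p t i := by
    intro t
    have : ∀ j, ∑ i ∈ S j, p t i = ∑ i, if i ∈ S j then p t i else 0 := fun j => by simp
    simp only [this]
    rw [Finset.sum_comm, Finset.mul_sum]
    refine Finset.sum_congr rfl fun i _ => ?_
    rw [← Finset.sum_filter, Finset.sum_const, nsmul_eq_mul]
    ring
  simp only [hc]
  have hX : Integrable (fun t => ∑ j, x t j) (Measure.pi (muj a abar f)) :=
    integrable_finsetSum _ fun j _ => hx j
  have hR : Integrable (fun t => ∑ i, p t i * r i) (Measure.pi (muj a abar f)) :=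
    integrable_finsetSum _ fun i _ => (hp i).mul_const _
  have hQ : Integrable (fun t => ∑ j, ∑ i ∈ S j, p t i) (Measure.pi (muj a abar f)) :=
    integrable_finsetSum _ fun j _ => hq j
  have hXR : Integrable (fun t => ∑ j, x t j - ∑ i, p t i * r i) (Measure.pi (muj a abar f)) :=
    hX.sub hR
  rw [integral_sub hXR (hQ.const_mul _), integral_sub hX hR, integral_const_mul,
    integral_finsetSum _ fun j _ => hx j]
  have hG := integrable_finsetSum (μ := Measure.pi (muj a abar f)) Finset.univ fun j _ => hg j
  simp only [sub_mul _ (hval / θ), Finset.sum_sub_distrib, ← Finset.mul_sum]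
  rw [integral_sub hG (hQ.const_mul _), integral_const_mul,
    integral_finsetSum _ fun j _ => hg j, Finset.sum_congr rfl fun j _ => hk j]
  simp only [Finset.sum_add_distrib, ← Finset.mul_sum, Finset.sum_neg_distrib]
  field_simp
  ring

end Caching
end

section
/- Fix a measurable allocation p : T → ℝ^m satisfying fraction feasibility (FF) and such that each p̃_j is monotone increasing. Define the payment rule x*_j(t) = θ t_j ∑_{i∈S_j} p_i(t) − θ ∫_{a_j}^{t_j} ∑_{i∈S_j} p_i(τ, t_{−j}) dτ for each j and t ∈ T. Then x* satisfies conditions (ii) and (iii) of Lemma 1 with ṽ_j(a_j) = 0 for every j (in particular, the envelope condition ṽ_j(t) = ṽ_j(a_j) + θ ∫_{a_j}^{t} p̃_j(τ) dτ holds for all t and j), and x* maximizes the objective −∑_{j=1}^n ṽ_j(a_j) over all integrable payment rules x satisfying conditions (ii) and (iii) of Lemma 1, achieving the optimal value 0. (Proposition 1.) -/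
open MeasureTheory Finset

noncomputable section Caching

/-- The payment rule x*_j(t) = θ t_j ∑_{i∈S_j} p_i(t)
− θ ∫_{a_j}^{t_j} ∑_{i∈S_j} p_i(τ, t_{−j}) dτ of Proposition 1. -/
def xstar {n m : ℕ} (θ : ℝ) (a : Fin n → ℝ) (S : Fin n → Finset (Fin m))
    (p : (Fin n → ℝ) → Fin m → ℝ) (t : Fin n → ℝ) (j : Fin n) : ℝ :=
  θ * t j * (∑ i ∈ S j, p t i)
    - θ * ∫ τ in (a j)..(t j), ∑ i ∈ S j, p (Function.update t j τ) i

lemma aux_restrict {n : ℕ} (a abar : Fin n → ℝ) :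
    (volume : Measure (Fin n → ℝ)).restrict (Tspace a abar)
      = Measure.pi fun j => (volume : Measure ℝ).restrict (Set.Icc (a j) (abar j)) := by
  rw [Tspace, volume_pi, Measure.restrict_pi_pi]

lemma aux_dens_int {n : ℕ} (a abar : Fin n → ℝ) (f : Fin n → ℝ → ℝ)
    (hfprob : ∀ j, ∫ t in Set.Icc (a j) (abar j), f j t = 1) :
    IntegrableOn (jointDens f) (Tspace a abar) := by
  rw [IntegrableOn, aux_restrict]
  refine Integrable.fintype_prod (f := f) fun j => ?_
  by_contra h
  have := hfprob j
  rw [integral_undef h] at this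
  norm_num at this

lemma aux_Tmeas {n : ℕ} (a abar : Fin n → ℝ) : MeasurableSet (Tspace a abar) :=
  MeasurableSet.univ_pi fun _ => measurableSet_Icc

lemma aux_key {n m : ℕ} (θ : ℝ)
    (a abar : Fin n → ℝ)
    (f : Fin n → ℝ → ℝ)
    (hfmeas : ∀ j, Measurable (f j))
    (hfprob : ∀ j, ∫ t in Set.Icc (a j) (abar j), f j t = 1)
    (S : Fin n → Finset (Fin m))
    (p : (Fin n → ℝ) → Fin m → ℝ) (hpmeas : Measurable p)
    (hFF : ∀ t ∈ Tspace a abar, (∀ i, 0 ≤ p t i) ∧ ∑ i, p t i ≤ 1)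
    (j : Fin n) (t : ℝ) (ht : t ∈ Set.Icc (a j) (abar j)) :
    vtld θ a abar f S p (xstar θ a S p) j t
      = θ * ∫ τ in (a j)..t, interimAlloc a abar f S p j τ := by
  have hdm : Measurable (jointDens f) := by
    unfold jointDens
    exact Finset.measurable_prod _ fun i _ => (hfmeas i).comp (measurable_pi_apply i)
  have hQm : Measurable fun s : Fin n → ℝ => ∑ i ∈ S j, p s i :=
    Finset.measurable_sum _ fun i _ => (measurable_pi_apply i).comp hpmeas
  have hup : Measurable fun z : ℝ × (Fin n → ℝ) => Function.update z.2 j z.1 := by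
    refine measurable_pi_lambda _ fun k => ?_
    by_cases hk : k = j
    · subst hk; simpa using measurable_fst
    · simp only [Function.update_of_ne hk]
      exact (measurable_pi_apply k).comp measurable_snd
  have hupT : ∀ s ∈ Tspace a abar, ∀ τ ∈ Set.Icc (a j) (abar j),
      Function.update s j τ ∈ Tspace a abar := by
    intro s hs τ hτ k _
    by_cases hk : k = j
    · subst hk; simpa using hτ
    · rw [Function.update_of_ne hk]; exact hs k trivial
  have hbd : ∀ s ∈ Tspace a abar, ‖∑ i ∈ S j, p s i‖ ≤ 1 := by
    intro s hs
    obtain ⟨h0, h1⟩ := hFF s hs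
    rw [Real.norm_of_nonneg (Finset.sum_nonneg fun i _ => h0 i)]
    exact (Finset.sum_le_sum_of_subset_of_nonneg (Finset.subset_univ _)
      fun i _ _ => h0 i).trans h1
  have hdi := aux_dens_int a abar f hfprob
  have hGm : Measurable fun z : ℝ × (Fin n → ℝ) =>
      (∑ i ∈ S j, p (Function.update z.2 j z.1) i) * jointDens f z.2 :=
    (hQm.comp hup).mul (hdm.comp measurable_snd)
  have hI1 : IntegrableOn (fun s => (∑ i ∈ S j, p (Function.update s j t) i) * jointDens f s)
      (Tspace a abar) := by
    refine Integrable.mono hdi (hGm.comp (measurable_const.prodMk measurable_id)).aestronglyMeasurable ?_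
    filter_upwards [ae_restrict_mem (aux_Tmeas a abar)] with s hs
    rw [norm_mul]
    exact mul_le_of_le_one_left (norm_nonneg _) (hbd _ (hupT s hs t ht))
  have hI2 : Integrable (Function.uncurry fun (τ : ℝ) (s : Fin n → ℝ) =>
      (∑ i ∈ S j, p (Function.update s j τ) i) * jointDens f s)
      (((volume : Measure ℝ).restrict (Set.Ioc (a j) t)).prod
        ((volume : Measure (Fin n → ℝ)).restrict (Tspace a abar))) := by
    have hd2 : Integrable (fun z : ℝ × (Fin n → ℝ) => jointDens f z.2)
        (((volume : Measure ℝ).restrict (Set.Ioc (a j) t)).prod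
        ((volume : Measure (Fin n → ℝ)).restrict (Tspace a abar))) := by
      exact Integrable.comp_snd hdi _
    refine Integrable.mono hd2 hGm.aestronglyMeasurable ?_
    rw [Measure.prod_restrict]
    filter_upwards [ae_restrict_mem (measurableSet_Ioc.prod (aux_Tmeas a abar))] with z hz
    simp only [Function.uncurry]
    rw [norm_mul]
    exact mul_le_of_le_one_left (norm_nonneg _)
      (hbd _ (hupT z.2 hz.2 z.1 ⟨hz.1.1.le, hz.1.2.trans ht.2⟩))
  have hswap := integral_integral_swap hI2
  have hI3 := hI2.integral_prod_right
  simp only [Function.uncurry_apply_pair] at hI3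
  have hpay : interimPay a abar f (xstar θ a S p) j t
      = θ * t * interimAlloc a abar f S p j t
        - θ * ∫ τ in (a j)..t, interimAlloc a abar f S p j τ := by
    rw [intervalIntegral.integral_of_le ht.1]
    unfold interimPay interimAlloc
    rw [hswap, ← integral_const_mul, ← integral_const_mul,
      ← integral_sub (hI1.const_mul _) (hI3.const_mul _)]
    refine integral_congr_ae (Filter.Eventually.of_forall fun s => ?_)
    simp only [xstar, Function.update_self, Function.update_idem]
    rw [intervalIntegral.integral_of_le ht.1, integral_mul_const]
    ring
  rw [vtld, hpay]
  ring

/-- Proposition 1: for a fixed feasible allocation p with monotone interim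
allocations, the payment rule x* satisfies conditions (ii) and (iii) of
Lemma 1 with ṽ_j(a_j) = 0, and it maximizes −∑_j ṽ_j(a_j) over all integrable
payment rules satisfying (ii) and (iii), achieving the optimal value 0. -/
theorem stmt_8 {n m : ℕ} (θ : ℝ) (hθ : 0 < θ)
    (a abar : Fin n → ℝ) (hab : ∀ j, a j < abar j)
    (f : Fin n → ℝ → ℝ)
    (hfmeas : ∀ j, Measurable (f j))
    (hfpos : ∀ j, ∀ t ∈ Set.Icc (a j) (abar j), 0 < f j t)
    (hfprob : ∀ j, ∫ t in Set.Icc (a j) (abar j), f j t = 1)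
    (S : Fin n → Finset (Fin m))
    (p : (Fin n → ℝ) → Fin m → ℝ) (hpmeas : Measurable p)
    (hFF : ∀ t ∈ Tspace a abar, (∀ i, 0 ≤ p t i) ∧ ∑ i, p t i ≤ 1)
    (hmono : ∀ j, MonotoneOn (interimAlloc a abar f S p j) (Set.Icc (a j) (abar j))) :
    -- x* satisfies (iii) with equality: ṽ*_j(a_j) = 0 for every j
    (∀ j, vtld θ a abar f S p (xstar θ a S p) j (a j) = 0) ∧
    -- x* satisfies the envelope condition (ii)
    (∀ j, ∀ t ∈ Set.Icc (a j) (abar j),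
        vtld θ a abar f S p (xstar θ a S p) j t
          = vtld θ a abar f S p (xstar θ a S p) j (a j)
            + θ * ∫ τ in (a j)..t, interimAlloc a abar f S p j τ) ∧
    -- x* maximizes −∑_j ṽ_j(a_j) over payment rules satisfying (ii) and (iii) …
    (∀ x : (Fin n → ℝ) → Fin n → ℝ, Measurable x →
      (∀ j, IntegrableOn (fun t => x t j * jointDens f t) (Tspace a abar)) →
      (∀ j, ∀ t ∈ Set.Icc (a j) (abar j),
          vtld θ a abar f S p x j t
            = vtld θ a abar f S p x j (a j)
              + θ * ∫ τ in (a j)..t, interimAlloc a abar f S p j τ) →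
      (∀ j, 0 ≤ vtld θ a abar f S p x j (a j)) →
      -(∑ j, vtld θ a abar f S p x j (a j))
        ≤ -(∑ j, vtld θ a abar f S p (xstar θ a S p) j (a j))) ∧
    -- … achieving the optimal value 0
    -(∑ j, vtld θ a abar f S p (xstar θ a S p) j (a j)) = 0 := by
  have key := aux_key θ a abar f hfmeas hfprob S p hpmeas hFF
  have h0 : ∀ j, vtld θ a abar f S p (xstar θ a S p) j (a j) = 0 := by
    intro j
    rw [key j (a j) ⟨le_rfl, (hab j).le⟩]
    simp
  refine ⟨h0, fun j t ht => by rw [h0 j, key j t ht, zero_add], ?_, by simp [h0]⟩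
  intro x _ _ _ hx
  simp only [h0, Finset.sum_const_zero, neg_zero]
  exact neg_nonpos.2 (Finset.sum_nonneg fun j _ => hx j)

end Caching
end

section
/- Fix j ∈ {1,…,n}, τ_j, t_j ∈ T_j with τ_j ≤ t_j, and t_{−j} ∈ T_{−j}. Suppose each c_s is monotone increasing on T_s. If there exists l ∈ S_j that attains the maximum of W_i(τ_j, t_{−j}) over i ∈ {1,…,m} and W_l(τ_j, t_{−j}) > 0, then l also attains the maximum of W_i(t_j, t_{−j}) over i ∈ {1,…,m} and W_l(t_j, t_{−j}) > 0. (Case 1 of the monotonicity argument in the proof of Proposition 2.) -/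
open Finset

/-- The virtual welfare of content i at type profile t:
W_i(t) = ∑_{s ∈ Ω_i} (θ c_s(t_s) − h(θ)) − r_i, where Ω_i = {j : i ∈ S_j}. -/
def virtWelfare {n m : ℕ} (θ hval : ℝ) (r : Fin m → ℝ)
    (S : Fin n → Finset (Fin m)) (c : Fin n → ℝ → ℝ)
    (i : Fin m) (t : Fin n → ℝ) : ℝ :=
  (∑ s ∈ Finset.univ.filter fun j => i ∈ S j, (θ * c s (t s) - hval)) - r i

/-- Case 1 of the monotonicity argument in the proof of Proposition 2: if each
c_s is monotone increasing, τ_j ≤ t_j, and l ∈ S_j attains the maximum of the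
virtual welfares at (τ_j, t_{−j}) with positive value, then l also attains the
maximum at (t_j, t_{−j}) with positive value. -/
theorem stmt_10 {n m : ℕ} (θ hval : ℝ) (hθ : 0 < θ) (hh : 0 ≤ hval)
    (r : Fin m → ℝ) (a abar : Fin n → ℝ)
    (S : Fin n → Finset (Fin m)) (c : Fin n → ℝ → ℝ)
    (hc : ∀ s, MonotoneOn (c s) (Set.Icc (a s) (abar s)))
    (j : Fin n) (τj tj : ℝ)
    (hτ : τj ∈ Set.Icc (a j) (abar j)) (ht : tj ∈ Set.Icc (a j) (abar j))
    (hle : τj ≤ tj)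
    (t : Fin n → ℝ) (htT : ∀ s, t s ∈ Set.Icc (a s) (abar s))
    (l : Fin m) (hl : l ∈ S j)
    (hmax : ∀ i, virtWelfare θ hval r S c i (Function.update t j τj)
        ≤ virtWelfare θ hval r S c l (Function.update t j τj))
    (hpos : 0 < virtWelfare θ hval r S c l (Function.update t j τj)) :
    (∀ i, virtWelfare θ hval r S c i (Function.update t j tj)
        ≤ virtWelfare θ hval r S c l (Function.update t j tj)) ∧
    0 < virtWelfare θ hval r S c l (Function.update t j tj) := by
  have key : ∀ i, virtWelfare θ hval r S c i (Function.update t j tj)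
      = virtWelfare θ hval r S c i (Function.update t j τj)
        + if i ∈ S j then θ * (c j tj - c j τj) else 0 := by
    intro i
    have h : (∑ s ∈ Finset.univ.filter fun k => i ∈ S k,
          (θ * c s (Function.update t j tj s) - hval))
        - (∑ s ∈ Finset.univ.filter fun k => i ∈ S k,
          (θ * c s (Function.update t j τj s) - hval))
        = if i ∈ S j then θ * (c j tj - c j τj) else 0 := by
      rw [← Finset.sum_sub_distrib, Finset.sum_filter, Finset.sum_eq_single j]
      · simp only [Function.update_self]
        split_ifs <;> ring
      · intro b _ hb
        simp [Function.update_of_ne hb]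
      · simp
    unfold virtWelfare
    linarith
  have hd : 0 ≤ θ * (c j tj - c j τj) :=
    mul_nonneg hθ.le (sub_nonneg.mpr (hc j hτ ht hle))
  have hL := key l
  rw [if_pos hl] at hL
  refine ⟨fun i => ?_, by linarith⟩
  have hi := key i
  have := hmax i
  split_ifs at hi <;> linarith
end

section
/- Fix t ∈ T and j ∈ {1,…,n}, and suppose each c_s is strictly increasing and continuous on T_s. Define β_j = max{0, max_{i∉S_j} (∑_{s∈Ω_i} (θ c_s(t_s) − h(θ)) − r_i)} and φ_j(τ) = θ c_j(τ) − h(θ) + max_{i∈S_j} (∑_{s∈Ω_i, s≠j} (θ c_s(t_s) − h(θ)) − r_i) for τ ∈ T_j. Then ∫_{a_j}^{t_j} ∑_{i∈S_j} p*_i(τ, t_{−j}) dτ equals: t_j − a_j if φ_j(a_j) ≥ β_j; 0 if φ_j(t_j) < β_j; and t_j − ξ_j if φ_j(a_j) < β_j ≤ φ_j(t_j), where ξ_j is the unique solution in [a_j, t_j] of φ_j(ξ_j) = β_j, i.e., ξ_j = c_j^{−1}( (1/θ)[ β_j + h(θ) − max_{i∈S_j} (∑_{s∈Ω_i, s≠j}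 (θ c_s(t_s) − h(θ)) − r_i) ] ). (Proposition 3.) -/
open Finset MeasureTheory

lemma aux_integral (g : ℝ → ℝ) (a ξ b : ℝ) (h1 : a ≤ ξ) (h2 : ξ ≤ b)
    (h0 : ∀ τ, a < τ → τ < ξ → g τ = 0) (h3 : ∀ τ, ξ < τ → τ ≤ b → g τ = 1) :
    ∫ τ in a..b, g τ = b - ξ := by
  have e : ∫ τ in a..b, g τ = ∫ τ in a..b, (Set.Ioc ξ b).indicator (fun _ => (1:ℝ)) τ := by
    apply intervalIntegral.integral_congr_ae
    have : ∀ᵐ τ : ℝ, τ ≠ ξ := by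
      simp [ae_iff, measure_singleton]
    filter_upwards [this] with τ hτ hm
    rw [Set.uIoc_of_le (h1.trans h2)] at hm
    rcases lt_or_gt_of_ne hτ with h | h
    · rw [h0 τ hm.1 h, Set.indicator_of_notMem]
      intro h'
      exact absurd h'.1 (not_lt.2 h.le)
    · rw [h3 τ h hm.2, Set.indicator_of_mem (show τ ∈ Set.Ioc ξ b from ⟨h, hm.2⟩)]
  rw [e, intervalIntegral.integral_of_le (h1.trans h2),
    setIntegral_indicator measurableSet_Ioc,
    Set.inter_eq_right.2 (Set.Ioc_subset_Ioc_left h1)]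
  simp [h2]

/-- Proposition 3: the threshold structure of the integral
∫_{a_j}^{t_j} ∑_{i∈S_j} p*_i(τ, t_{−j}) dτ appearing in the optimal payment.
Here β_j = max{0, max_{i∉S_j} W_i(t)},
φ_j(τ) = θ c_j(τ) − h(θ) + max_{i∈S_j} (∑_{s∈Ω_i, s≠j}(θ c_s(t_s) − h(θ)) − r_i),
and p* is the virtual-welfare-maximizing allocation: at every feasible type
profile, if some W_i is positive then p* puts the whole cache on a maximizer of
the virtual welfare, and otherwise p* caches nothing. -/
theorem stmt_13 {n m : ℕ} (hm : 0 < m) (θ hval : ℝ) (hθ : 0 < θ) (hh : 0 ≤ hval)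
    (r : Fin m → ℝ) (a abar : Fin n → ℝ) (hab : ∀ s, a s < abar s)
    (S : Fin n → Finset (Fin m)) (hS : ∀ j, (S j).Nonempty)
    (c : Fin n → ℝ → ℝ)
    (hcmono : ∀ s, StrictMonoOn (c s) (Set.Icc (a s) (abar s)))
    (hccont : ∀ s, ContinuousOn (c s) (Set.Icc (a s) (abar s)))
    (pstar : (Fin n → ℝ) → Fin m → ℝ)
    (hp1 : ∀ t : Fin n → ℝ, (∀ s, t s ∈ Set.Icc (a s) (abar s)) →
        (∃ i, 0 < virtWelfare θ hval r S c i t) →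
        ∃ k, (∀ i, virtWelfare θ hval r S c i t ≤ virtWelfare θ hval r S c k t) ∧
          pstar t k = 1 ∧ ∀ i, i ≠ k → pstar t i = 0)
    (hp2 : ∀ t : Fin n → ℝ, (∀ s, t s ∈ Set.Icc (a s) (abar s)) →
        (∀ i, virtWelfare θ hval r S c i t ≤ 0) → ∀ i, pstar t i = 0)
    (t : Fin n → ℝ) (htT : ∀ s, t s ∈ Set.Icc (a s) (abar s)) (j : Fin n) :
    let βj : ℝ := max 0 (sSup ((fun i => virtWelfare θ hval r S c i t) '' {i | i ∉ S j}))
    let φj : ℝ → ℝ := fun τ => θ * c j τ - hval +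
        (S j).sup' (hS j) fun i =>
          (∑ s ∈ (Finset.univ.filter fun j' => i ∈ S j').erase j,
            (θ * c s (t s) - hval)) - r i
    (βj ≤ φj (a j) →
      (∫ τ in (a j)..(t j), ∑ i ∈ S j, pstar (Function.update t j τ) i)
        = t j - a j) ∧
    (φj (t j) < βj →
      (∫ τ in (a j)..(t j), ∑ i ∈ S j, pstar (Function.update t j τ) i) = 0) ∧
    (φj (a j) < βj → βj ≤ φj (t j) →
      ∃! ξ, ξ ∈ Set.Icc (a j) (t j) ∧ φj ξ = βj ∧
        (∫ τ in (a j)..(t j), ∑ i ∈ S j, pstar (Function.update t j τ) i)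
          = t j - ξ) := by
  intro βj φj
  have hWin : ∀ τ, ∀ i ∈ S j, virtWelfare θ hval r S c i (Function.update t j τ) =
      θ * c j τ - hval + ((∑ s ∈ (Finset.univ.filter fun j' => i ∈ S j').erase j,
            (θ * c s (t s) - hval)) - r i) := by
    intro τ i hi
    unfold virtWelfare
    rw [← Finset.add_sum_erase _ _ (show j ∈ Finset.univ.filter fun j' => i ∈ S j' by simp [hi])]
    rw [Finset.sum_congr rfl (g := fun s => θ * c s (t s) - hval)]
    · simp; ring
    · intro s hs
      rw [Function.update_of_ne (Finset.ne_of_mem_erase hs)]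
  have hWout : ∀ τ, ∀ i ∉ S j, virtWelfare θ hval r S c i (Function.update t j τ) =
      virtWelfare θ hval r S c i t := by
    intro τ i hi
    unfold virtWelfare
    rw [Finset.sum_congr rfl]
    intro s hs
    have : s ≠ j := by
      rintro rfl
      exact hi (by simpa using hs)
    rw [Function.update_of_ne this]
  have hβ0 : 0 ≤ βj := le_max_left _ _
  have hβW : ∀ i ∉ S j, virtWelfare θ hval r S c i t ≤ βj := fun i hi =>
    (le_csSup (Set.toFinite _).bddAbove (Set.mem_image_of_mem (fun i => virtWelfare θ hval r S c i t)
      (show i ∈ {i | i ∉ S j} from hi))).trans (le_max_right _ _)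
  have hβlt : ∀ x, x < βj → x < 0 ∨ ∃ i ∉ S j, x < virtWelfare θ hval r S c i t := by
    intro x hx
    rcases lt_max_iff.1 hx with h | h
    · exact Or.inl h
    · rcases Set.eq_empty_or_nonempty
        ((fun i => virtWelfare θ hval r S c i t) '' {i | i ∉ S j}) with he | hne
      · rw [he, Real.sSup_empty] at h
        exact Or.inl h
      · obtain ⟨_, ⟨i, hi, rfl⟩, h'⟩ := exists_lt_of_lt_csSup hne h
        exact Or.inr ⟨i, hi, h'⟩
  have hφle : ∀ τ, ∀ i ∈ S j,
      virtWelfare θ hval r S c i (Function.update t j τ) ≤ φj τ := by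
    intro τ i hi
    rw [hWin τ i hi]
    exact add_le_add_right (Finset.le_sup' (fun i =>
          (∑ s ∈ (Finset.univ.filter fun j' => i ∈ S j').erase j,
            (θ * c s (t s) - hval)) - r i) hi) _
  have hφex : ∀ τ, ∃ i ∈ S j,
      virtWelfare θ hval r S c i (Function.update t j τ) = φj τ := by
    intro τ
    obtain ⟨i, hi, h⟩ := Finset.exists_mem_eq_sup' (hS j) (fun i =>
          (∑ s ∈ (Finset.univ.filter fun j' => i ∈ S j').erase j,
            (θ * c s (t s) - hval)) - r i)
    refine ⟨i, hi, ?_⟩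
    rw [hWin τ i hi]
    simp only [φj]
    rw [h]
  have hu : ∀ τ ∈ Set.Icc (a j) (abar j),
      ∀ s, Function.update t j τ s ∈ Set.Icc (a s) (abar s) := by
    intro τ hτ s
    by_cases h : s = j
    · subst h; simpa using hτ
    · rw [Function.update_of_ne h]; exact htT s
  have hg1 : ∀ τ ∈ Set.Icc (a j) (abar j), βj < φj τ →
      ∑ i ∈ S j, pstar (Function.update t j τ) i = 1 := by
    intro τ hτ hlt
    obtain ⟨i, hi, hie⟩ := hφex τ
    obtain ⟨k, hk, hk1, hk0⟩ := hp1 _ (hu τ hτ) ⟨i, by rw [hie]; linarith⟩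
    have hkS : k ∈ S j := by
      by_contra hkS
      have h1 := hk i
      rw [hWout τ k hkS, hie] at h1
      linarith [hβW k hkS]
    rw [Finset.sum_eq_single_of_mem k hkS (fun i _ h => hk0 i h), hk1]
  have hg0 : ∀ τ ∈ Set.Icc (a j) (abar j), φj τ < βj →
      ∑ i ∈ S j, pstar (Function.update t j τ) i = 0 := by
    intro τ hτ hlt
    apply Finset.sum_eq_zero
    intro i hi
    by_cases hex : ∃ i, 0 < virtWelfare θ hval r S c i (Function.update t j τ)
    · obtain ⟨k, hk, hk1, hk0⟩ := hp1 _ (hu τ hτ) hex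
      apply hk0
      rintro rfl
      have h1 := hφle τ i hi
      rcases hβlt _ hlt with h | ⟨l, hl, h⟩
      · obtain ⟨l, hl⟩ := hex
        linarith [hk l]
      · have h2 := hk l
        rw [hWout τ l hl] at h2
        linarith
    · push Not at hex
      exact hp2 _ (hu τ hτ) hex i
  have hmono : StrictMonoOn φj (Set.Icc (a j) (abar j)) := by
    intro x hx y hy hxy
    have := mul_lt_mul_of_pos_left (hcmono j hx hy hxy) hθ
    simp only [φj]
    linarith
  have hcont : ContinuousOn φj (Set.Icc (a j) (abar j)) :=
    ((continuousOn_const.mul (hccont j)).sub continuousOn_const).add continuousOn_const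
  have haj : a j ∈ Set.Icc (a j) (abar j) := ⟨le_rfl, (hab j).le⟩
  have htj := htT j
  have hsub : Set.Icc (a j) (t j) ⊆ Set.Icc (a j) (abar j) := Set.Icc_subset_Icc_right htj.2
  refine ⟨fun h => ?_, fun h => ?_, fun h h' => ?_⟩
  · apply aux_integral _ _ _ _ le_rfl htj.1
    · intro τ h1 h2; linarith
    · intro τ h1 h2
      have hτ := hsub ⟨h1.le, h2⟩
      exact hg1 τ hτ (h.trans_lt (hmono haj hτ h1))
  · rw [aux_integral _ _ (t j) _ htj.1 le_rfl, sub_self]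
    · intro τ h1 h2
      have hτ := hsub ⟨h1.le, h2.le⟩
      exact hg0 τ hτ ((hmono hτ htj h2).trans h)
    · intro τ h1 h2; linarith
  · obtain ⟨ξ, hξ, hξe⟩ := intermediate_value_Icc htj.1 (hcont.mono hsub) ⟨h.le, h'⟩
    refine ⟨ξ, ⟨hξ, hξe, ?_⟩, ?_⟩
    · apply aux_integral _ _ _ _ hξ.1 hξ.2
      · intro τ h1 h2
        have hτ := hsub ⟨h1.le, h2.le.trans hξ.2⟩
        exact hg0 τ hτ (hξe ▸ hmono hτ (hsub hξ) h2)
      · intro τ h1 h2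
        have hτ := hsub ⟨hξ.1.trans h1.le, h2⟩
        exact hg1 τ hτ (hξe ▸ hmono (hsub hξ) hτ h1)
    · rintro y ⟨hy, hye, -⟩
      exact hmono.injOn (hsub hy) (hsub hξ) (hye.trans hξe.symm)
end

section
/- Suppose each c_s is strictly increasing on T_s. For any t ∈ T and any j ∈ {1,…,n}, if ∑_{i∈S_j} p*_i(t) = 0, then x*_j(t) = 0, where x*_j(t) = θ t_j ∑_{i∈S_j} p*_i(t) − θ ∫_{a_j}^{t_j} ∑_{i∈S_j} p*_i(τ, t_{−j}) dτ. (Proposition 4: a user whose interesting contents are not cached pays nothing.) -/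
open Finset MeasureTheory

theorem virtWelfare_update {n m : ℕ} (θ hval : ℝ) (r : Fin m → ℝ)
    (S : Fin n → Finset (Fin m)) (c : Fin n → ℝ → ℝ)
    (i : Fin m) (t : Fin n → ℝ) (j : Fin n) (τ : ℝ) :
    virtWelfare θ hval r S c i (Function.update t j τ) = virtWelfare θ hval r S c i t
      + if i ∈ S j then θ * (c j τ - c j (t j)) else 0 := by
  have h : ∀ s, (if i ∈ S s then θ * c s (Function.update t j τ s) - hval else 0)
      = (if i ∈ S s then θ * c s (t s) - hval else 0)
        + (if s = j then (if i ∈ S j then θ * (c j τ - c j (t j)) else 0) else 0) := by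
    intro s
    by_cases hs : s = j
    · subst hs
      by_cases hi : i ∈ S s
      · simp [hi]; ring
      · simp [hi]
    · simp [hs]
  unfold virtWelfare
  rw [Finset.sum_filter, Finset.sum_filter, Finset.sum_congr rfl (fun s _ => h s),
    Finset.sum_add_distrib]
  simp only [Finset.sum_ite_eq', Finset.mem_univ, if_true]
  ring

/-- Proposition 4: in the optimal mechanism, a user whose interesting contents
are not cached pays nothing: if ∑_{i∈S_j} p*_i(t) = 0 then
x*_j(t) = θ t_j ∑_{i∈S_j} p*_i(t) − θ ∫_{a_j}^{t_j} ∑_{i∈S_j} p*_i(τ, t_{−j}) dτ = 0.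
Here p* is the virtual-welfare-maximizing allocation and each c_s is strictly
increasing. -/
theorem stmt_14 {n m : ℕ} (θ hval : ℝ) (hθ : 0 < θ) (hh : 0 ≤ hval)
    (r : Fin m → ℝ) (a abar : Fin n → ℝ) (hab : ∀ s, a s < abar s)
    (S : Fin n → Finset (Fin m))
    (c : Fin n → ℝ → ℝ)
    (hcmono : ∀ s, StrictMonoOn (c s) (Set.Icc (a s) (abar s)))
    (pstar : (Fin n → ℝ) → Fin m → ℝ)
    (hp1 : ∀ t : Fin n → ℝ, (∀ s, t s ∈ Set.Icc (a s) (abar s)) →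
        (∃ i, 0 < virtWelfare θ hval r S c i t) →
        ∃ k, (∀ i, virtWelfare θ hval r S c i t ≤ virtWelfare θ hval r S c k t) ∧
          pstar t k = 1 ∧ ∀ i, i ≠ k → pstar t i = 0)
    (hp2 : ∀ t : Fin n → ℝ, (∀ s, t s ∈ Set.Icc (a s) (abar s)) →
        (∀ i, virtWelfare θ hval r S c i t ≤ 0) → ∀ i, pstar t i = 0)
    (t : Fin n → ℝ) (htT : ∀ s, t s ∈ Set.Icc (a s) (abar s)) (j : Fin n)
    (hzero : (∑ i ∈ S j, pstar t i) = 0) :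
    θ * t j * (∑ i ∈ S j, pstar t i)
      - θ * ∫ τ in (a j)..(t j), ∑ i ∈ S j, pstar (Function.update t j τ) i
      = 0 := by
  have key : ∀ τ ∈ Set.uIcc (a j) (t j),
      (∑ i ∈ S j, pstar (Function.update t j τ) i) = (fun _ => (0 : ℝ)) τ := by
    intro τ hτ
    rw [Set.uIcc_of_le (htT j).1] at hτ
    rcases eq_or_lt_of_le hτ.2 with he | hlt
    · rw [he, Function.update_eq_self]; exact hzero
    have hτT : τ ∈ Set.Icc (a j) (abar j) := ⟨hτ.1, hτ.2.trans (htT j).2⟩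
    have huT : ∀ s, Function.update t j τ s ∈ Set.Icc (a s) (abar s) := by
      intro s
      by_cases hs : s = j
      · subst hs; simpa using hτT
      · simpa [hs] using htT s
    have hc := mul_lt_mul_of_pos_left (hcmono j hτT (htT j) hlt) hθ
    by_cases hex : ∃ i, 0 < virtWelfare θ hval r S c i (Function.update t j τ)
    · obtain ⟨k, hk, -, hk0⟩ := hp1 _ huT hex
      obtain ⟨i0, hi0⟩ := hex
      have hkpos := hi0.trans_le (hk i0)
      by_cases hkS : k ∈ S j
      · exfalso
        have e1 := virtWelfare_update θ hval r S c k t j τ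
        rw [if_pos hkS] at e1
        obtain ⟨k', hk', h1, h0⟩ := hp1 t htT ⟨k, by linarith⟩
        by_cases hkS' : k' ∈ S j
        · rw [Finset.sum_eq_single_of_mem k' hkS' (fun i _ hi => h0 i hi), h1] at hzero
          exact one_ne_zero hzero
        · have e2 := virtWelfare_update θ hval r S c k' t j τ
          rw [if_neg hkS'] at e2
          have := hk k'
          have := hk' k
          linarith
      · exact Finset.sum_eq_zero fun i hi => hk0 i (fun h => hkS (h ▸ hi))
    · push Not at hex
      exact Finset.sum_eq_zero fun i _ => hp2 _ huT hex i
  rw [intervalIntegral.integral_congr key, hzero]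
  simp
end

section
/- Suppose each c_j is strictly increasing on T_j (regularity), and let (p*, x*) be the optimal mechanism: p* : T → ℝ^m is a measurable allocation such that at every t ∈ T, if max_i W_i(t) > 0 then p*_k(t) = 1 for some maximizer k of i ↦ W_i(t) and p*_i(t) = 0 for i ≠ k, while otherwise p*(t) = 0; and x*_j(t) = θ t_j ∑_{i∈S_j} p*_i(t) − θ ∫_{a_j}^{t_j} ∑_{i∈S_j} p*_i(τ, t_{−j}) dτ. Then the expected revenue of the optimal mechanism equals the expected maximal positive virtual welfare: ER(p*, x*) = ∫_T ∑_{i=1}^m W_i(t) p*_i(t) f(t) dt = ∫_T max(0, max_{i=1,…,m} W_i(t)) f(t) dt. (Optimal-value formula, equation (33).) -/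
open MeasureTheory Finset

noncomputable section Caching

/-- The virtual valuation c_j(t) = t − (1 − F_j(t))/f_j(t). -/
def virtVal {n : ℕ} (a : Fin n → ℝ) (f : Fin n → ℝ → ℝ) (j : Fin n) (t : ℝ) : ℝ :=
  t - (1 - ∫ τ in (a j)..t, f j τ) / f j t

/-- Expected revenue
ER(p, x) = ∫_T [ ∑_j x_j(t) − ∑_i p_i(t) r_i − ∑_i p_i(t) |Ω_i| h(θ) ] f(t) dt. -/
def expRev {n m : ℕ} (hval : ℝ) (r : Fin m → ℝ) (a abar : Fin n → ℝ)
    (f : Fin n → ℝ → ℝ) (S : Fin n → Finset (Fin m))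
    (p : (Fin n → ℝ) → Fin m → ℝ) (x : (Fin n → ℝ) → Fin n → ℝ) : ℝ :=
  ∫ t in Tspace a abar,
    (∑ j, x t j - ∑ i, p t i * r i
      - ∑ i, p t i * ((Finset.univ.filter fun j => i ∈ S j).card : ℝ) * hval)
      * jointDens f t


theorem aux_mp {n : ℕ} (μ : Fin n → Measure ℝ) [∀ j, SigmaFinite (μ j)] (j : Fin n) :
    MeasurePreserving (fun q : (Fin n → ℝ) × ℝ => (Function.update q.1 j q.2, q.1 j))
      ((Measure.pi μ).prod (μ j)) ((Measure.pi μ).prod (μ j)) := by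
  obtain _ | k := n
  · exact j.elim0
  have he := measurePreserving_piFinSuccAbove μ j
  have h1 := he.prod (MeasurePreserving.id (μ j))
  have h2 := measurePreserving_prodAssoc (μ j) (Measure.pi fun i => μ (j.succAbove i)) (μ j)
  have h3 := Measure.measurePreserving_swap (μ := μ j)
    (ν := (Measure.pi fun i => μ (j.succAbove i)).prod (μ j))
  have h4 := (Measure.measurePreserving_swap (μ := Measure.pi fun i => μ (j.succAbove i))
    (ν := μ j)).prod (MeasurePreserving.id (μ j))
  have h5 := (he.symm).prod (MeasurePreserving.id (μ j))
  have h := h5.comp (h4.comp (h3.comp (h2.comp h1)))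
  convert h using 1
  funext q
  refine Prod.ext ?_ rfl
  funext i
  simp only [Function.comp, Prod.map, MeasurableEquiv.prodAssoc, Prod.swap,
    MeasurableEquiv.piFinSuccAbove]
  refine Fin.succAboveCases j ?_ (fun i => ?_) i
  · simp [Fin.insertNthEquiv]
  · simp [Fin.insertNthEquiv, Fin.removeNth]

theorem aux_key_s16 {n : ℕ} (a abar : Fin n → ℝ) (f : Fin n → ℝ → ℝ)
    (hfmeas : ∀ j, Measurable (f j))
    (hfpos : ∀ j, ∀ t ∈ Set.Icc (a j) (abar j), 0 < f j t)
    (hfprob : ∀ j, ∫ t in Set.Icc (a j) (abar j), f j t = 1)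
    (g : (Fin n → ℝ) → ℝ) (hg : Measurable g) (C : ℝ)
    (hC : ∀ t ∈ Tspace a abar, |g t| ≤ C) (j : Fin n) :
    IntegrableOn (fun t => (∫ τ in (a j)..(t j), g (Function.update t j τ)) * jointDens f t)
      (Tspace a abar) ∧
    IntegrableOn (fun t => (1 - ∫ τ in (a j)..(t j), f j τ) / f j (t j) * g t * jointDens f t)
      (Tspace a abar) ∧
    ∫ t in Tspace a abar, (∫ τ in (a j)..(t j), g (Function.update t j τ)) * jointDens f t =
    ∫ t in Tspace a abar, (1 - ∫ τ in (a j)..(t j), f j τ) / f j (t j) * g t * jointDens f t := by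
  set μ : Fin n → Measure ℝ := fun j => volume.restrict (Set.Icc (a j) (abar j)) with hμ
  have hP : (volume : Measure (Fin n → ℝ)).restrict (Tspace a abar) = Measure.pi μ := by
    rw [Tspace, volume_pi, Measure.restrict_pi_pi]
  have hTm : MeasurableSet (Tspace a abar) :=
    MeasurableSet.univ_pi fun j => measurableSet_Icc
  have hfi : ∀ j, Integrable (f j) (μ j) := fun j => by
    by_contra hc
    have := hfprob j
    rw [integral_undef hc] at this
    exact zero_ne_one this
  have hjm : Measurable (jointDens f) := by
    unfold jointDens
    exact Finset.measurable_prod _ fun k _ => (hfmeas k).comp (measurable_pi_apply k)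
  have hji : Integrable (jointDens f) (Measure.pi μ) := Integrable.fintype_prod hfi
  have hmp := aux_mp μ j
  let K : (Fin n → ℝ) × ℝ → ℝ := fun q =>
    (Set.Iic (q.1 j)).indicator (fun τ => g (Function.update q.1 j τ)) q.2 * jointDens f q.1
  have hum : Measurable (fun q : (Fin n → ℝ) × ℝ => Function.update q.1 j q.2) :=
    hmp.measurable.fst
  have hKm : Measurable K := by
    refine Measurable.mul ?_ (hjm.comp measurable_fst)
    have : (fun q : (Fin n → ℝ) × ℝ =>
        (Set.Iic (q.1 j)).indicator (fun τ => g (Function.update q.1 j τ)) q.2) =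
        Set.indicator {q : (Fin n → ℝ) × ℝ | q.2 ≤ q.1 j}
          (fun q => g (Function.update q.1 j q.2)) := by
      funext q
      simp [Set.indicator_apply]
    rw [this]
    exact (hg.comp hum).indicator
      (measurableSet_le measurable_snd ((measurable_pi_apply j).comp measurable_fst))
  have haeT : ∀ᵐ t ∂(Measure.pi μ), t ∈ Tspace a abar := by
    rw [← hP]; exact ae_restrict_mem hTm
  have haeI : ∀ᵐ t ∂(μ j), t ∈ Set.Icc (a j) (abar j) := ae_restrict_mem measurableSet_Icc
  have hKi : Integrable K ((Measure.pi μ).prod (μ j)) := by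
    have hb : Integrable (fun q : (Fin n → ℝ) × ℝ => C * jointDens f q.1)
        ((Measure.pi μ).prod (μ j)) := (hji.const_mul C).comp_fst (μ j)
    refine hb.mono' hKm.aestronglyMeasurable ?_
    have h1 := (Measure.quasiMeasurePreserving_fst (μ := Measure.pi μ) (ν := μ j)).ae haeT
    have h2 := (Measure.quasiMeasurePreserving_snd (μ := Measure.pi μ) (ν := μ j)).ae haeI
    filter_upwards [h1, h2] with q hq1 hq2
    have hpos : 0 < jointDens f q.1 := Finset.prod_pos fun k _ => hfpos k _ (hq1 k trivial)
    have hup : Function.update q.1 j q.2 ∈ Tspace a abar := by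
      intro k _
      by_cases hk : k = j
      · subst hk; simpa using hq2
      · simpa [hk] using hq1 k trivial
    have hC0 : 0 ≤ C := (abs_nonneg _).trans (hC _ hup)
    simp only [K, norm_mul, Real.norm_eq_abs, abs_of_pos hpos]
    refine mul_le_mul_of_nonneg_right ?_ hpos.le
    by_cases hc : q.2 ≤ q.1 j
    · simpa [Set.indicator_apply, hc] using hC _ hup
    · simpa [Set.indicator_apply, hc] using hC0
  let K2 : (Fin n → ℝ) × ℝ → ℝ := fun q =>
    (Set.Ici (q.1 j)).indicator (f j) q.2 * (g q.1 * ∏ k ∈ Finset.univ.erase j, f k (q.1 k))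
  have hKK : (fun q : (Fin n → ℝ) × ℝ => K (Function.update q.1 j q.2, q.1 j)) = K2 := by
    funext q
    have hprod : jointDens f (Function.update q.1 j q.2) =
        f j q.2 * ∏ k ∈ Finset.univ.erase j, f k (q.1 k) := by
      rw [jointDens, ← Finset.mul_prod_erase _ _ (Finset.mem_univ j)]
      congr 1
      · simp
      · refine Finset.prod_congr rfl fun k hk => ?_
        rw [Function.update_of_ne (Finset.ne_of_mem_erase hk)]
    simp only [K, K2, hprod]
    by_cases hc : q.1 j ≤ q.2
    · simp [Set.indicator_apply, hc]; ring
    · simp [Set.indicator_apply, hc]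
  have hK2i : Integrable K2 ((Measure.pi μ).prod (μ j)) := by
    rw [← hKK]; exact hmp.integrable_comp_of_integrable hKi
  have hint : ∫ q, K q ∂((Measure.pi μ).prod (μ j)) = ∫ q, K2 q ∂((Measure.pi μ).prod (μ j)) := by
    rw [← hKK]
    have := integral_map (μ := (Measure.pi μ).prod (μ j)) hmp.measurable.aemeasurable
      (f := K) (by rw [hmp.map_eq]; exact hKm.aestronglyMeasurable)
    rw [hmp.map_eq] at this
    exact this
  rw [integral_prod _ hKi, integral_prod _ hK2i] at hint
  have e1 : (fun t => ∫ τ, K (t, τ) ∂(μ j)) =ᵐ[Measure.pi μ]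
      (fun t => (∫ τ in (a j)..(t j), g (Function.update t j τ)) * jointDens f t) := by
    filter_upwards [haeT] with t ht
    have htj := ht j trivial
    simp only [K]
    rw [integral_mul_const, hμ, setIntegral_indicator measurableSet_Iic,
      intervalIntegral.integral_of_le htj.1, ← integral_Icc_eq_integral_Ioc]
    congr 3
    ext τ
    simp only [Set.mem_inter_iff, Set.mem_Icc, Set.mem_Iic] at *
    constructor
    · rintro ⟨⟨h1, h2⟩, h3⟩; exact ⟨h1, h3⟩
    · rintro ⟨h1, h2⟩; exact ⟨⟨h1, h2.trans htj.2⟩, h2⟩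
  have e2 : (fun t => ∫ τ, K2 (t, τ) ∂(μ j)) =ᵐ[Measure.pi μ]
      (fun t => (1 - ∫ τ in (a j)..(t j), f j τ) / f j (t j) * g t * jointDens f t) := by
    filter_upwards [haeT] with t ht
    have htj := ht j trivial
    have hfp := hfpos j _ htj
    have hF : ∫ τ, (Set.Ici (t j)).indicator (f j) τ ∂(μ j) =
        1 - ∫ τ in (a j)..(t j), f j τ := by
      have hs : Set.Icc (a j) (abar j) ∩ Set.Ici (t j) = Set.Icc (t j) (abar j) := by
        ext τ
        simp only [Set.mem_inter_iff, Set.mem_Icc, Set.mem_Ici] at *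
        constructor
        · rintro ⟨⟨h1, h2⟩, h3⟩; exact ⟨h3, h2⟩
        · rintro ⟨h1, h2⟩; exact ⟨⟨htj.1.trans h1, h2⟩, h1⟩
      have hII : IntervalIntegrable (f j) volume (a j) (abar j) := by
        rw [intervalIntegrable_iff_integrableOn_Icc_of_le (htj.1.trans htj.2)]
        exact hfi j
      have hadd := intervalIntegral.integral_add_adjacent_intervals (μ := volume)
        (hII.mono_set (c := a j) (d := t j) (by
          rw [Set.uIcc_of_le htj.1, Set.uIcc_of_le (htj.1.trans htj.2)]
          exact Set.Icc_subset_Icc_right htj.2))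
        (hII.mono_set (c := t j) (d := abar j) (by
          rw [Set.uIcc_of_le htj.2, Set.uIcc_of_le (htj.1.trans htj.2)]
          exact Set.Icc_subset_Icc_left htj.1))
      have h1 := hfprob j
      rw [integral_Icc_eq_integral_Ioc, ← intervalIntegral.integral_of_le (htj.1.trans htj.2)] at h1
      rw [hμ, setIntegral_indicator measurableSet_Ici, hs, integral_Icc_eq_integral_Ioc,
        ← intervalIntegral.integral_of_le htj.2]
      linarith
    simp only [K2]
    rw [integral_mul_const, hF, jointDens, ← Finset.mul_prod_erase _ _ (Finset.mem_univ j)]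
    field_simp
  rw [IntegrableOn, IntegrableOn, hP]
  refine ⟨hKi.integral_prod_left.congr e1, hK2i.integral_prod_left.congr e2, ?_⟩
  rw [← integral_congr_ae e1, ← integral_congr_ae e2, hint]

/-- Optimal-value formula (equation (33)): under regularity, the expected
revenue of the optimal mechanism (p*, x*) equals the expected maximal positive
virtual welfare:
ER(p*, x*) = ∫_T ∑_i W_i(t) p*_i(t) f(t) dt = ∫_T max(0, max_i W_i(t)) f(t) dt. -/
theorem stmt_16 {n m : ℕ} (hm : 0 < m) (θ hval : ℝ) (hθ : 0 < θ) (hh : 0 ≤ hval)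
    (r : Fin m → ℝ) (a abar : Fin n → ℝ) (hab : ∀ j, a j < abar j)
    (f : Fin n → ℝ → ℝ)
    (hfmeas : ∀ j, Measurable (f j))
    (hfpos : ∀ j, ∀ t ∈ Set.Icc (a j) (abar j), 0 < f j t)
    (hfprob : ∀ j, ∫ t in Set.Icc (a j) (abar j), f j t = 1)
    (S : Fin n → Finset (Fin m))
    -- regularity: each virtual valuation is strictly increasing
    (hreg : ∀ j, StrictMonoOn (virtVal a f j) (Set.Icc (a j) (abar j)))
    (pstar : (Fin n → ℝ) → Fin m → ℝ) (hpsmeas : Measurable pstar)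
    (hp1 : ∀ t ∈ Tspace a abar,
        (∃ i, 0 < virtWelfare θ hval r S (virtVal a f) i t) →
        ∃ k, (∀ i, virtWelfare θ hval r S (virtVal a f) i t
              ≤ virtWelfare θ hval r S (virtVal a f) k t) ∧
          pstar t k = 1 ∧ ∀ i, i ≠ k → pstar t i = 0)
    (hp2 : ∀ t ∈ Tspace a abar,
        (∀ i, virtWelfare θ hval r S (virtVal a f) i t ≤ 0) → ∀ i, pstar t i = 0)
    (hWint : ∀ i, IntegrableOn
        (fun t => virtWelfare θ hval r S (virtVal a f) i t * jointDens f t)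
        (Tspace a abar)) :
    expRev hval r a abar f S pstar (xstar θ a S pstar)
      = (∫ t in Tspace a abar,
          (∑ i, virtWelfare θ hval r S (virtVal a f) i t * pstar t i)
            * jointDens f t) ∧
    (∫ t in Tspace a abar,
        (∑ i, virtWelfare θ hval r S (virtVal a f) i t * pstar t i)
          * jointDens f t)
      = ∫ t in Tspace a abar,
          (max 0 (⨆ i, virtWelfare θ hval r S (virtVal a f) i t))
            * jointDens f t := by
  have hTm : MeasurableSet (Tspace a abar) :=
    MeasurableSet.univ_pi fun j => measurableSet_Icc
  have hp01 : ∀ t ∈ Tspace a abar, ∀ i, |pstar t i| ≤ 1 := by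
    intro t ht i
    by_cases hc : ∃ i, 0 < virtWelfare θ hval r S (virtVal a f) i t
    · obtain ⟨k, -, h1, h0⟩ := hp1 t ht hc
      by_cases hik : i = k
      · subst hik; simp [h1]
      · simp [h0 i hik]
    · push Not at hc
      simp [hp2 t ht hc i]
  have hpm : ∀ i, Measurable fun t => pstar t i := fun i => (measurable_pi_apply i).comp hpsmeas
  constructor
  · have key := fun j => aux_key_s16 a abar f hfmeas hfpos hfprob (fun t => ∑ i ∈ S j, pstar t i)
      (Finset.measurable_sum _ fun i _ => hpm i) (∑ i ∈ S j, (1 : ℝ))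
      (fun t ht => (Finset.abs_sum_le_sum_abs _ _).trans
        (Finset.sum_le_sum fun i _ => hp01 t ht i)) j
    have hR : IntegrableOn (fun t => (∑ i, virtWelfare θ hval r S (virtVal a f) i t * pstar t i)
            * jointDens f t) (Tspace a abar) := by
      have : (fun t => (∑ i, virtWelfare θ hval r S (virtVal a f) i t * pstar t i)
            * jointDens f t) = fun t => ∑ i, pstar t i *
              (virtWelfare θ hval r S (virtVal a f) i t * jointDens f t) := by
        funext t
        rw [Finset.sum_mul]
        exact Finset.sum_congr rfl fun i _ => by ring
      rw [this]
      refine integrable_finsetSum _ fun i _ => ?_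
      refine (hWint i).bdd_mul (c := 1) (hpm i).aestronglyMeasurable ?_
      filter_upwards [ae_restrict_mem hTm] with t ht
      exact hp01 t ht i
    have hpt : ∀ t, (∑ j, xstar θ a S pstar t j - ∑ i, pstar t i * r i
      - ∑ i, pstar t i * ((Finset.univ.filter fun j => i ∈ S j).card : ℝ) * hval)
      * jointDens f t = (∑ i, virtWelfare θ hval r S (virtVal a f) i t * pstar t i)
            * jointDens f t + ∑ j, θ *
        ((1 - ∫ τ in (a j)..(t j), f j τ) / f j (t j) * (∑ i ∈ S j, pstar t i) * jointDens f t
        - (∫ τ in (a j)..(t j), ∑ i ∈ S j, pstar (Function.update t j τ) i) * jointDens f t) := by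
      intro t
      have hW : ∑ i, virtWelfare θ hval r S (virtVal a f) i t * pstar t i =
          ∑ j, θ * virtVal a f j (t j) * (∑ i ∈ S j, pstar t i) - ∑ i, pstar t i * r i
      - ∑ i, pstar t i * ((Finset.univ.filter fun j => i ∈ S j).card : ℝ) * hval := by
        have hsw : ∑ j, θ * virtVal a f j (t j) * (∑ i ∈ S j, pstar t i) =
            ∑ i, ∑ j ∈ Finset.univ.filter (fun j => i ∈ S j),
              θ * virtVal a f j (t j) * pstar t i := by
          simp_rw [Finset.mul_sum]
          exact Finset.sum_comm' (by simp)
        rw [hsw, ← Finset.sum_sub_distrib, ← Finset.sum_sub_distrib]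
        refine Finset.sum_congr rfl fun i _ => ?_
        rw [virtWelfare, Finset.sum_sub_distrib, Finset.sum_const, nsmul_eq_mul, ← Finset.sum_mul]
        ring
      have hX : ∑ j, xstar θ a S pstar t j = ∑ j, θ * virtVal a f j (t j) * (∑ i ∈ S j, pstar t i)
          + ∑ j, θ * ((1 - ∫ τ in (a j)..(t j), f j τ) / f j (t j) * (∑ i ∈ S j, pstar t i)
        - (∫ τ in (a j)..(t j), ∑ i ∈ S j, pstar (Function.update t j τ) i)) := by
        rw [← Finset.sum_add_distrib]
        refine Finset.sum_congr rfl fun j _ => ?_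
        rw [xstar, virtVal]
        ring
      have hY : ∑ j, θ *
        ((1 - ∫ τ in (a j)..(t j), f j τ) / f j (t j) * (∑ i ∈ S j, pstar t i) * jointDens f t
        - (∫ τ in (a j)..(t j), ∑ i ∈ S j, pstar (Function.update t j τ) i) * jointDens f t) =
        (∑ j, θ * ((1 - ∫ τ in (a j)..(t j), f j τ) / f j (t j) * (∑ i ∈ S j, pstar t i)
        - (∫ τ in (a j)..(t j), ∑ i ∈ S j, pstar (Function.update t j τ) i))) * jointDens f t := by
        rw [Finset.sum_mul]
        exact Finset.sum_congr rfl fun j _ => by ring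
      rw [hW, hX, hY]
      ring
    rw [expRev]
    simp_rw [hpt]
    have hI : ∀ j, Integrable (fun t => θ *
        ((1 - ∫ τ in (a j)..(t j), f j τ) / f j (t j) * (∑ i ∈ S j, pstar t i) * jointDens f t
        - (∫ τ in (a j)..(t j), ∑ i ∈ S j, pstar (Function.update t j τ) i) * jointDens f t))
        (volume.restrict (Tspace a abar)) := fun j =>
      (Integrable.sub (key j).2.1 (key j).1).const_mul θ
    rw [integral_add hR (integrable_finsetSum _ fun j _ => hI j),
      integral_finsetSum _ fun j _ => hI j]
    rw [Finset.sum_eq_zero, add_zero]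
    intro j _
    rw [integral_const_mul, integral_sub (key j).2.1 (key j).1, (key j).2.2, sub_self, mul_zero]
  · refine setIntegral_congr_fun hTm fun t ht => ?_
    haveI : Nonempty (Fin m) := ⟨⟨0, hm⟩⟩
    have hbdd : BddAbove (Set.range fun i => virtWelfare θ hval r S (virtVal a f) i t) :=
      (Set.finite_range _).bddAbove
    congr 1
    by_cases hc : ∃ i, 0 < virtWelfare θ hval r S (virtVal a f) i t
    · obtain ⟨k, hk, h1, h0⟩ := hp1 t ht hc
      obtain ⟨i, hi⟩ := hc
      have hs : (⨆ i, virtWelfare θ hval r S (virtVal a f) i t) =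
          virtWelfare θ hval r S (virtVal a f) k t :=
        le_antisymm (ciSup_le hk) (le_ciSup hbdd k)
      rw [hs, max_eq_right (hi.le.trans (hk i)), Finset.sum_eq_single k, h1, mul_one]
      · intro i _ hik
        rw [h0 i hik, mul_zero]
      · simp
    · push Not at hc
      rw [max_eq_left (ciSup_le hc)]
      exact Finset.sum_eq_zero fun i _ => by rw [hp2 t ht hc i, mul_zero]


end Caching
end
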